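/- arXiv:1402.5113 — 2 statements merged into one kernel-verified Lean document; each statement's English description precedes it below -/
import Mathlib

section
/- For every positive integer c there is an integer f(c) = O(c²) (one may take f(c) = 3485c²) such that if n > 10·f(c) and P is a poset with |P| ≤ 2n + 1 and dim(P) ≥ n − c, then P contains the standard example S_d as a subposet with d ≥ n − f(c). -/
/-- `x` and `y` are incomparable elements of a poset. -/
def Incomp {α : Type*} [PartialOrder α] (x y : α) : Prop := ¬ x ≤ y ∧ ¬ y ≤ x

/-- `r` is a linear extension of the partial order on `α`. -/
def IsLinearExtension {α : Type*} [PartialOrder α] (r : α → α → Prop) : Prop :=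
  IsLinearOrder α r ∧ ∀ x y : α, x ≤ y → r x y

/-- `α` admits a realizer consisting of `d` linear extensions. -/
def RealizerOfSize (α : Type*) [PartialOrder α] (d : ℕ) : Prop :=
  ∃ L : Fin d → (α → α → Prop), (∀ i, IsLinearExtension (L i)) ∧
    ∀ x y : α, x ≤ y ↔ ∀ i, L i x y

/-- The Dushnik–Miller dimension: the least positive integer `d`
for which the order is the intersection of `d` linear extensions. -/
noncomputable def dimP (α : Type*) [PartialOrder α] : ℕ :=
  sInf {d | 0 < d ∧ RealizerOfSize α d}

/-- `α` contains the standard example `S d` as an induced subposet. -/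
def ContainsStdExample (α : Type*) [PartialOrder α] (d : ℕ) : Prop :=
  ∃ a b : Fin d → α, Function.Injective a ∧ Function.Injective b ∧
    (∀ i j : Fin d, a i ≠ b j) ∧
    (∀ i j : Fin d, a i < b j ↔ i ≠ j) ∧
    (∀ i j : Fin d, i ≠ j → Incomp (a i) (a j)) ∧
    (∀ i j : Fin d, i ≠ j → Incomp (b i) (b j)) ∧
    (∀ i j : Fin d, ¬ b j ≤ a i)

universe u
section comb
open Finset Classical

noncomputable def oN {ι : Type u} [Fintype ι] (R : ι → ι → Prop) (J : Finset ι) : Finset ι :=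
  univ.filter (fun i => ∃ j ∈ J, R j i)

theorem mem_oN {ι : Type u} [Fintype ι] {R : ι → ι → Prop} {J : Finset ι} {i : ι} :
    i ∈ oN R J ↔ ∃ j ∈ J, R j i := by simp [oN]

theorem sub_oN {ι : Type u} [Fintype ι] {R : ι → ι → Prop} (hR : ∀ i, R i i) (J : Finset ι) :
    J ⊆ oN R J := fun i hi => mem_oN.2 ⟨i, hi, hR i⟩

theorem link {ι : Type u} [Fintype ι] (R : ι → ι → Prop) (hR : ∀ i, R i i) (Y Q : Finset ι) (s : ℕ)
    (h : ∀ X : Finset ι, Disjoint X Y → X.card + s ≤ (oN R X ∪ Q).card) :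
    ∃ σ : Equiv.Perm ι, ∃ V : Finset ι, V ⊆ Y ∧ V.card = s ∧ (∀ i, i ∉ V → R i (σ i)) ∧
      ∀ i ∈ V, σ i ∈ Q := by
  let t : ι ⊕ Fin s → Finset (ι ⊕ Fin s) := fun x => match x with
    | Sum.inl i => (univ.filter (fun j => R i j)).disjSum (if i ∈ Y then univ else ∅)
    | Sum.inr _ => Q.disjSum ∅
  have hall : ∀ X : Finset (ι ⊕ Fin s), X.card ≤ (X.biUnion t).card := by
    intro X
    have hX : X.card = X.toLeft.card + X.toRight.card := by
      rw [Finset.card_toLeft_add_card_toRight]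
    have hr : X.toRight.card ≤ s := by
      simpa using Finset.card_le_univ X.toRight
    have hl : X.toLeft.card ≤ (oN R X.toLeft).card := card_le_card (sub_oN hR _)
    have mono : ∀ (P : Finset ι) (K : Finset (Fin s)), (P.disjSum K ⊆ X.biUnion t) →
        P.card + K.card ≤ (X.biUnion t).card := by
      intro P K hPK
      rw [← Finset.card_disjSum]; exact card_le_card hPK
    have inleft : ∀ j ∈ oN R X.toLeft, Sum.inl j ∈ X.biUnion t := by
      intro j hj
      obtain ⟨i, hi, hij⟩ := mem_oN.1 hj
      refine mem_biUnion.2 ⟨Sum.inl i, by simpa using hi, ?_⟩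
      simp [t, hij]
    by_cases hY : Disjoint X.toLeft Y
    · by_cases hr0 : X.toRight = ∅
      · have := mono (oN R X.toLeft) ∅ (by
          intro x hx
          rcases x with x | x
          · exact inleft x (by simpa using hx)
          · simp at hx)
        rw [hX, hr0]; simp at this ⊢; omega
      · have := mono (oN R X.toLeft ∪ Q) ∅ (by
          intro x hx
          rcases x with x | x
          · rcases mem_union.1 (by simpa using hx : x ∈ oN R X.toLeft ∪ Q) with h1 | h1
            · exact inleft x h1
            · obtain ⟨β, hβ⟩ := Finset.nonempty_iff_ne_empty.2 hr0
              refine mem_biUnion.2 ⟨Sum.inr β, by simpa using hβ, ?_⟩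
              simp [t, h1]
          · simp at hx)
        have h2 := h _ hY
        simp at this
        omega
    · obtain ⟨i, hi, hiY⟩ := Finset.not_disjoint_iff.1 hY
      have := mono (oN R X.toLeft) univ (by
          intro x hx
          rcases x with x | x
          · exact inleft x (by simpa using hx)
          · refine mem_biUnion.2 ⟨Sum.inl i, by simpa using hi, ?_⟩
            simp [t, hiY])
      simp at this
      omega
  obtain ⟨f, finj, hf⟩ := (Finset.all_card_le_biUnion_card_iff_exists_injective t).1 hall
  have fsurj : Function.Surjective f := Finite.injective_iff_surjective.1 finj
  have hfr : ∀ β, ∃ j ∈ Q, f (Sum.inr β) = Sum.inl j := by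
    intro β
    have := hf (Sum.inr β)
    simp only [t] at this
    rcases hx : f (Sum.inr β) with j | j
    · rw [hx] at this; exact ⟨j, by simpa using this, rfl⟩
    · rw [hx] at this; simp at this
  choose g hgQ hg using hfr
  let σ0 : ι → ι := fun i => match f (Sum.inl i) with
    | Sum.inl j => j
    | Sum.inr β => g β
  have s1 : ∀ i j, f (Sum.inl i) = Sum.inl j → σ0 i = j := by intro i j h; simp [σ0, h]
  have s2 : ∀ i β, f (Sum.inl i) = Sum.inr β → σ0 i = g β := by intro i j h; simp [σ0, h]
  have σinj : Function.Injective σ0 := by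
    intro i i' hii
    rcases h1 : f (Sum.inl i) with j | β <;> rcases h2 : f (Sum.inl i') with j' | β'
    · rw [s1 i j h1, s1 i' j' h2] at hii
      have := finj (h1.trans ((congrArg Sum.inl hii).trans h2.symm)); simpa using this
    · rw [s1 i j h1, s2 i' β' h2] at hii
      have := finj (h1.trans ((congrArg Sum.inl hii).trans (hg β').symm)); simp at this
    · rw [s2 i β h1, s1 i' j' h2] at hii
      have := finj (h2.trans ((congrArg Sum.inl hii.symm).trans (hg β).symm)); simp at this
    · rw [s2 i β h1, s2 i' β' h2] at hii
      have h3 := finj ((hg β).trans ((congrArg Sum.inl hii).trans (hg β').symm))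
      have h4 : β = β' := by simpa using h3
      have := finj (h1.trans ((congrArg Sum.inr h4).trans h2.symm)); simpa using this
  let σ : Equiv.Perm ι := Equiv.ofBijective σ0 (Finite.injective_iff_bijective.1 σinj)
  have hinr : ∀ β, ∃ i, f (Sum.inl i) = Sum.inr β := by
    intro β
    obtain ⟨x, hx⟩ := fsurj (Sum.inr β)
    rcases x with x | x
    · exact ⟨x, hx⟩
    · rw [hg x] at hx; simp at hx
  choose q hq using hinr
  have qinj : Function.Injective q := by
    intro β β' h
    have := (hq β).symm.trans ((congrArg (fun z => f (Sum.inl z)) h).trans (hq β'))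
    simpa using this
  refine ⟨σ, univ.image q, ?_, ?_, ?_, ?_⟩
  · intro i hi
    obtain ⟨β, -, rfl⟩ := mem_image.1 hi
    have := hf (Sum.inl (q β))
    rw [hq β] at this
    by_contra hne
    simp [t, hne] at this
  · rw [card_image_of_injective _ qinj]; simp
  · intro i hi
    rcases h1 : f (Sum.inl i) with j | β
    · have : σ i = j := s1 i j h1
      rw [this]
      have := hf (Sum.inl i)
      rw [h1] at this
      simpa [t] using this
    · exfalso
      apply hi
      have := finj (h1.trans (hq β).symm)
      exact mem_image.2 ⟨β, mem_univ _, by simpa using this.symm⟩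
  · intro i hi
    obtain ⟨β, -, rfl⟩ := mem_image.1 hi
    have : σ (q β) = g β := s2 _ _ (hq β)
    rw [this]; exact hgQ β

/-- no arcs between X0 and Q0, few removed -/
theorem split {ι : Type u} [Fintype ι] (R : ι → ι → Prop) (hR : ∀ i, R i i) (C : ℕ)
    (hT : ¬ ∃ σ : Equiv.Perm ι, ∃ V : Finset ι, V.card = C + 1 ∧ (∀ i, i ∉ V → R i (σ i)) ∧
      ∀ i ∈ V, ∀ j ∈ V, ¬ R i (σ j))
    (J : Finset ι) (hJ : 4 * C + 1 ≤ J.card)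
    (hJ2 : (oN (fun i j => R j i) J).card + 4 * C < Fintype.card ι) :
    ∃ X Q : Finset ι, (∀ x ∈ X, ∀ q ∈ Q, ¬ R x q ∧ ¬ R q x) ∧ 2 * C < X.card ∧ 2 * C < Q.card ∧
      (X ∪ Q)ᶜ.card ≤ 2 * C := by
  set M := oN (fun i j => R j i) J with hM
  have e1 : ∃ X : Finset ι, Disjoint X Mᶜ ∧ (oN R X ∪ J).card ≤ X.card + C := by
    by_contra hcon
    push Not at hcon
    obtain ⟨σ, V, hV, hc, h1, h2⟩ := link R hR Mᶜ J (C + 1) (fun X hX => by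
      have := hcon X hX; omega)
    refine hT ⟨σ, V, hc, h1, fun i hi j hj hij => ?_⟩
    have := hV hi
    rw [mem_compl] at this
    exact this (mem_oN.2 ⟨σ j, h2 j hj, hij⟩)
  obtain ⟨X, hXM, hX⟩ := e1
  have e2 : ∃ X' : Finset ι, Disjoint X' X ∧ (oN R X' ∪ (oN R X)ᶜ).card ≤ X'.card + C := by
    by_contra hcon
    push Not at hcon
    obtain ⟨σ, V, hV, hc, h1, h2⟩ := link R hR X (oN R X)ᶜ (C + 1) (fun X' hX' => by
      have := hcon X' hX'; omega)
    refine hT ⟨σ, V, hc, h1, fun i hi j hj hij => ?_⟩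
    have := h2 j hj
    rw [mem_compl] at this
    exact this (mem_oN.2 ⟨i, hV hi, hij⟩)
  obtain ⟨X', hX'X, hX'⟩ := e2
  have hXM' : X ⊆ M := by
    intro x hx
    by_contra hne
    exact (Finset.disjoint_left.1 hXM hx) (mem_compl.2 hne)
  have hXo := sub_oN hR X
  have hXo' := sub_oN hR X'
  set Sg := (oN R X' ∪ (oN R X)ᶜ) \ X' with hSg
  have cSg : Sg.card ≤ C := by
    rw [hSg, card_sdiff_of_subset (hXo'.trans subset_union_left)]; omega
  have c1 : (oN R X \ X).card ≤ C := by
    have := card_le_card (subset_union_left : oN R X ⊆ oN R X ∪ J)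
    rw [card_sdiff_of_subset hXo]; omega
  have c2 : J.card ≤ X.card + C := (card_le_card subset_union_right).trans hX
  have c3 : (oN R X).card ≤ X.card + C := (card_le_card subset_union_left).trans hX
  have c4 : X.card ≤ M.card := card_le_card hXM'
  have c5 : (oN R X)ᶜ.card + (oN R X).card = Fintype.card ι := by
    rw [card_compl]; have := card_le_univ (oN R X); omega
  refine ⟨X \ oN R X', (oN R X)ᶜ ∩ X', ?_, ?_, ?_, ?_⟩
  · intro x hx q hq
    rw [mem_sdiff] at hx
    rw [mem_inter, mem_compl] at hq
    exact ⟨fun h => hq.1 (mem_oN.2 ⟨x, hx.1, h⟩), fun h => hx.2 (mem_oN.2 ⟨q, hq.2, h⟩)⟩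
  · have : X ⊆ (X \ oN R X') ∪ Sg := by
      intro x hx
      by_cases h : x ∈ oN R X'
      · refine mem_union_right _ ?_
        rw [hSg, mem_sdiff]
        exact ⟨mem_union_left _ h, fun h' => Finset.disjoint_left.1 hX'X h' hx⟩
      · exact mem_union_left _ (mem_sdiff.2 ⟨hx, h⟩)
    have := (card_le_card this).trans (card_union_le _ _)
    omega
  · have : (oN R X)ᶜ ⊆ ((oN R X)ᶜ ∩ X') ∪ Sg := by
      intro x hx
      by_cases h : x ∈ X'
      · exact mem_union_left _ (mem_inter.2 ⟨hx, h⟩)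
      · exact mem_union_right _ (mem_sdiff.2 ⟨mem_union_right _ hx, h⟩)
    have := (card_le_card this).trans (card_union_le _ _)
    omega
  · have : ((X \ oN R X') ∪ ((oN R X)ᶜ ∩ X'))ᶜ ⊆ (oN R X \ X) ∪ Sg := by
      intro x hx
      rw [mem_compl, mem_union, mem_sdiff, mem_inter, mem_compl] at hx
      rw [mem_union, mem_sdiff, hSg, mem_sdiff, mem_union, mem_compl]
      have hd : x ∈ X' → x ∉ X := fun h h' => Finset.disjoint_left.1 hX'X h h'
      have := @hXo x
      tauto
    have := (card_le_card this).trans (card_union_le _ _)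
    omega

end comb

section comb2
open Finset Classical

def Save {ι : Type u} (R : ι → ι → Prop) (s : ℕ) : Prop :=
  ∃ σ : Equiv.Perm ι, ∃ V : Finset ι, ∃ w : ι → ι × Bool, V.card = s ∧ (∀ i, i ∉ V → R i (σ i)) ∧
    ∀ j ∈ V, ∀ j' ∈ V, R j (σ j') → ∃ i, i ∉ V ∧ R j (σ i) ∧ R i (σ j') ∧
      (w i = (j, true) ∨ w i = (j', false))

def SaveOn {ι : Type u} (R : ι → ι → Prop) (X : Finset ι) (s : ℕ) : Prop :=
  ∃ σ : Equiv.Perm ι, ∃ V : Finset ι, ∃ w : ι → ι × Bool, V ⊆ X ∧ V.card = s ∧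
    (∀ i, i ∉ X → σ i = i) ∧ (∀ i ∈ X, i ∉ V → R i (σ i)) ∧
    ∀ j ∈ V, ∀ j' ∈ V, R j (σ j') → ∃ i ∈ X, i ∉ V ∧ R j (σ i) ∧ R i (σ j') ∧
      (w i = (j, true) ∨ w i = (j', false))

def NoT1 {ι : Type u} (R : ι → ι → Prop) (C : ℕ) : Prop :=
  ¬ ∃ σ : Equiv.Perm ι, ∃ V : Finset ι, V.card = C + 1 ∧ (∀ i, i ∉ V → R i (σ i)) ∧
      ∀ i ∈ V, ∀ j ∈ V, ¬ R i (σ j)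

theorem noT1_of_save {ι : Type u} (R : ι → ι → Prop) (C : ℕ) (h : ∀ s, Save R s → s ≤ C) :
    NoT1 R C := by
  rintro ⟨σ, V, hV, h1, h2⟩
  have := h (C+1) ⟨σ, V, fun i => (i, true), hV, h1, fun j hj j' hj' hh => absurd hh (h2 j hj j' hj')⟩
  omega

theorem noT1_flip {ι : Type u} (R : ι → ι → Prop) (C : ℕ) (h : NoT1 R C) :
    NoT1 (fun i j => R j i) C := by
  rintro ⟨σ, V, hV, h1, h2⟩
  refine h ⟨σ⁻¹, V.map σ.toEmbedding, by simpa using hV, ?_, ?_⟩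
  · intro i hi
    have : σ⁻¹ i ∉ V := by
      intro hh; apply hi
      exact mem_map.2 ⟨σ⁻¹ i, hh, by simp⟩
    simpa using h1 _ this
  · intro i hi j hj
    obtain ⟨a, ha, rfl⟩ := mem_map.1 hi
    obtain ⟨b, hb, rfl⟩ := mem_map.1 hj
    simpa using h2 b hb a ha

theorem save_zero {ι : Type u} (R : ι → ι → Prop) (hR : ∀ i, R i i) : Save R 0 :=
  ⟨1, ∅, fun i => (i, true), rfl, fun i _ => hR i, by simp⟩

theorem save_one {ι : Type u} (R : ι → ι → Prop) (hR : ∀ i, R i i) (z v : ι) (hzv : z ≠ v)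
    (h : R z v) : Save R 1 := by
  refine ⟨Equiv.swap z v, {v}, fun _ => (v, true), by simp, ?_, ?_⟩
  · intro i hi
    rw [mem_singleton] at hi
    by_cases hz : i = z
    · subst hz; simpa using h
    · rw [Equiv.swap_apply_of_ne_of_ne hz hi]; exact hR i
  · intro j hj j' hj' hh
    rw [mem_singleton] at hj hj'
    subst hj; subst hj'
    exact ⟨z, by simpa using hzv, by simpa using hR _, by simpa using hR z, Or.inl rfl⟩

theorem saveOn_of_sub {ι : Type u} (R : ι → ι → Prop) (X : Finset ι) (s : ℕ)
    (h : Save (fun i j : {x // x ∈ X} => R i j) s) : SaveOn R X s := by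
  obtain ⟨σ, V, w, hV, h1, h2⟩ := h
  let w' : ι → ι × Bool := fun i => if hi : i ∈ X then ((w ⟨i, hi⟩).1, (w ⟨i, hi⟩).2) else (i, true)
  have hw' : ∀ i : {x // x ∈ X}, w' i = (((w i).1 : ι), (w i).2) := by
    intro i; simp [w']
  refine ⟨Equiv.Perm.ofSubtype σ, V.map (Function.Embedding.subtype _), w', ?_, ?_, ?_, ?_, ?_⟩
  · intro i hi
    obtain ⟨a, ha, rfl⟩ := mem_map.1 hi
    exact a.2
  · simpa using hV
  · intro i hi
    exact Equiv.Perm.ofSubtype_apply_of_not_mem σ hi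
  · intro i hi hiV
    rw [Equiv.Perm.ofSubtype_apply_of_mem σ hi]
    apply h1 ⟨i, hi⟩
    intro hh
    exact hiV (mem_map.2 ⟨_, hh, rfl⟩)
  · intro j hj j' hj' hh
    obtain ⟨a, ha, rfl⟩ := mem_map.1 hj
    obtain ⟨b, hb, rfl⟩ := mem_map.1 hj'
    simp only [Function.Embedding.subtype_apply] at hh ⊢
    rw [Equiv.Perm.ofSubtype_apply_coe] at hh
    obtain ⟨i, hi, h3, h4, h5⟩ := h2 a ha b hb hh
    refine ⟨i, i.2, by simpa using hi, by simpa using h3, by simpa using h4, ?_⟩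
    rw [hw']
    rcases h5 with h5 | h5 <;> simp [h5]

theorem save_of_saveOn {ι : Type u} (R : ι → ι → Prop) (hR : ∀ i, R i i) (X : Finset ι) (s : ℕ)
    (h : SaveOn R X s) : Save R s := by
  obtain ⟨σ, V, w, hVX, hV, h0, h1, h2⟩ := h
  refine ⟨σ, V, w, hV, ?_, ?_⟩
  · intro i hi
    by_cases hX : i ∈ X
    · exact h1 i hX hi
    · rw [h0 i hX]; exact hR i
  · intro j hj j' hj' hh
    obtain ⟨i, _, h⟩ := h2 j hj j' hj' hh
    exact ⟨i, h⟩

theorem saveOn_add {ι : Type u} (R : ι → ι → Prop) (X Q : Finset ι) (s t : ℕ)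
    (hXQ : Disjoint X Q) (hno : ∀ x ∈ X, ∀ q ∈ Q, ¬ R x q ∧ ¬ R q x)
    (h : SaveOn R X s) (h' : SaveOn R Q t) : SaveOn R (X ∪ Q) (s + t) := by
  obtain ⟨σ, V, w, hVX, hV, h0, h1, h2⟩ := h
  obtain ⟨τ, W, w', hWX, hW, g0, g1, g2⟩ := h'
  have stab : ∀ (σ : Equiv.Perm ι) (X : Finset ι), (∀ i, i ∉ X → σ i = i) → ∀ i ∈ X, σ i ∈ X := by
    intro σ X h i hi
    by_contra hne
    have := h _ hne
    have := σ.injective this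
    rw [this] at hne; exact hne hi
  have hd : ∀ i, i ∈ X → i ∉ Q := fun i hi hq => Finset.disjoint_left.1 hXQ hi hq
  have eX : ∀ i ∈ X, (σ * τ) i = σ i := by
    intro i hi; simp [g0 i (hd i hi)]
  have eQ : ∀ i ∈ Q, (σ * τ) i = τ i := by
    intro i hi
    have := stab τ Q g0 i hi
    have h4 : τ i ∉ X := fun hh => hd _ hh this
    simp [h0 _ h4]
  refine ⟨σ * τ, V ∪ W, fun i => if i ∈ X then w i else w' i, union_subset_union hVX hWX, ?_, ?_, ?_, ?_⟩
  · rw [card_union_of_disjoint (hXQ.mono hVX hWX), hV, hW]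
  · intro i hi
    simp only [mem_union, not_or] at hi
    simp [g0 i hi.2, h0 i hi.1]
  · intro i hi hiV
    simp only [mem_union, not_or] at hiV
    rcases mem_union.1 hi with hi | hi
    · rw [eX i hi]; exact h1 i hi hiV.1
    · rw [eQ i hi]; exact g1 i hi hiV.2
  · intro j hj j' hj' hh
    rcases mem_union.1 hj with hj | hj <;> rcases mem_union.1 hj' with hj' | hj'
    · rw [eX j' (hVX hj')] at hh ⊢
      obtain ⟨i, hi, hiV, h3, h4, h5⟩ := h2 j hj j' hj' hh
      refine ⟨i, mem_union_left _ hi, ?_, ?_, h4, ?_⟩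
      · simp only [mem_union, not_or]
        exact ⟨hiV, fun hh => hd _ hi (hWX hh)⟩
      · rw [eX i hi]; exact h3
      · simpa [hi] using h5
    · rw [eQ j' (hWX hj')] at hh
      exact absurd hh (hno _ (hVX hj) _ (stab τ Q g0 _ (hWX hj'))).1
    · rw [eX j' (hVX hj')] at hh
      exact absurd hh (hno _ (stab σ X h0 _ (hVX hj')) _ (hWX hj)).2
    · rw [eQ j' (hWX hj')] at hh ⊢
      obtain ⟨i, hi, hiV, h3, h4, h5⟩ := g2 j hj j' hj' hh
      have hiX : i ∉ X := fun hh => hd _ hh hi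
      refine ⟨i, mem_union_right _ hi, ?_, ?_, h4, ?_⟩
      · simp only [mem_union, not_or]
        exact ⟨fun hh => hiX (hVX hh), hiV⟩
      · rw [eQ i hi]; exact h3
      · simpa [hiX] using h5
end comb2

section comb3
open Finset Classical

structure StA {ι : Type u} (R : ι → ι → Prop) (V : Finset ι) (p : ι → ι)
    (w : ι → Option (ι × Bool)) : Prop where
  arc : ∀ v ∈ V, R (p v) v
  pV : ∀ v ∈ V, p v ∉ V
  wV : ∀ v ∈ V, w v = none
  wp : ∀ v ∈ V, w (p v) = none
  inj : ∀ v ∈ V, ∀ v' ∈ V, p v = p v' → v = v'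
  help : ∀ v ∈ V, ∀ v' ∈ V, v ≠ v' → ∃ i, R v i ∧ R i (p v') ∧
    (w i = some (v, true) ∨ w i = some (v', false))

theorem StA.save {ι : Type u} {R : ι → ι → Prop} (hR : ∀ i, R i i) {V : Finset ι} {p : ι → ι}
    {w : ι → Option (ι × Bool)} (h : StA R V p w) : Save R V.card := by
  let f : ι → ι := fun i => if i ∈ V then p i else if hh : ∃ v ∈ V, p v = i then hh.choose else i
  have f1 : ∀ v ∈ V, f v = p v := by intro v hv; simp [f, hv]
  have f2 : ∀ v ∈ V, f (p v) = v := by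
    intro v hv
    have hh : ∃ v' ∈ V, p v' = p v := ⟨v, hv, rfl⟩
    have h3 := hh.choose_spec
    have : f (p v) = hh.choose := by
      simp only [f]
      rw [if_neg (h.pV v hv), dif_pos hh]
    rw [this]
    exact h.inj _ h3.1 _ hv h3.2
  have f3 : ∀ i, i ∉ V → (¬ ∃ v ∈ V, p v = i) → f i = i := by
    intro i hi hn
    simp only [f]
    rw [if_neg hi, dif_neg hn]
  have inv : Function.Involutive f := by
    intro i
    by_cases hi : i ∈ V
    · rw [f1 i hi, f2 i hi]
    · by_cases hn : ∃ v ∈ V, p v = i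
      · obtain ⟨v, hv, rfl⟩ := hn
        rw [f2 v hv, f1 v hv]
      · rw [f3 i hi hn, f3 i hi hn]
  refine ⟨inv.toPerm, V, fun i => (w i).getD (f i, true), rfl, ?_, ?_⟩
  · intro i hi
    change R i (f i)
    by_cases hn : ∃ v ∈ V, p v = i
    · obtain ⟨v, hv, rfl⟩ := hn
      rw [f2 v hv]; exact h.arc v hv
    · rw [f3 i hi hn]; exact hR i
  · intro j hj j' hj' hh
    change R j (f j') at hh
    by_cases hjj : j = j'
    · subst hjj
      refine ⟨p j, h.pV j hj, ?_, ?_, Or.inl ?_⟩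
      · change R j (f (p j)); rw [f2 j hj]; exact hR j
      · change R (p j) (f j); rw [f1 j hj]; exact hR _
      · simp [h.wp j hj, f2 j hj]
    · obtain ⟨i, h1, h2, h3⟩ := h.help j hj j' hj' hjj
      have hw : w i ≠ none := by rcases h3 with h3 | h3 <;> simp [h3]
      have hi : i ∉ V := fun hh => hw (h.wV i hh)
      have hn : ¬ ∃ v ∈ V, p v = i := by
        rintro ⟨v, hv, rfl⟩
        exact hw (h.wp v hv)
      refine ⟨i, hi, ?_, ?_, ?_⟩
      · change R j (f i); rw [f3 i hi hn]; exact h1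
      · change R i (f j'); rw [f1 j' hj']; exact h2
      · rcases h3 with h3 | h3 <;> simp [h3]

theorem StA.ext1 {ι : Type u} {R : ι → ι → Prop} {V : Finset ι} {p : ι → ι}
    {w : ι → Option (ι × Bool)} (h : StA R V p w) (z v : ι) (hv : v ∉ V) (hz : z ∉ V) (hzv : z ≠ v)
    (wv : w v = none) (wz : w z = none) (hzp : ∀ x ∈ V, p x ≠ z) (hvp : ∀ x ∈ V, p x ≠ v)
    (hr : R z v)
    (hT : ∀ x ∈ V, ∃ i, w i = some (x, true) ∧ R x i ∧ R i z)
    (hF : ∀ x ∈ V, ∃ i, w i = some (x, false) ∧ R i (p x) ∧ R v i) :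
    StA R (insert v V) (Function.update p v z) w := by
  have e1 : Function.update p v z v = z := by simp
  have e2 : ∀ x ∈ V, Function.update p v z x = p x := by
    intro x hx
    rw [Function.update_of_ne]
    rintro rfl; exact hv hx
  constructor
  · intro x hx
    rcases mem_insert.1 hx with rfl | hx
    · rw [e1]; exact hr
    · rw [e2 x hx]; exact h.arc x hx
  · intro x hx
    rcases mem_insert.1 hx with rfl | hx
    · rw [e1]; simp [hzv, hz]
    · rw [e2 x hx]; simp [hvp x hx, h.pV x hx]
  · intro x hx
    rcases mem_insert.1 hx with rfl | hx
    · exact wv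
    · exact h.wV x hx
  · intro x hx
    rcases mem_insert.1 hx with rfl | hx
    · rw [e1]; exact wz
    · rw [e2 x hx]; exact h.wp x hx
  · intro x hx y hy hxy
    rcases mem_insert.1 hx with rfl | hx1 <;> rcases mem_insert.1 hy with rfl | hy1
    · rfl
    · rw [e1, e2 y hy1] at hxy; exact absurd hxy.symm (hzp y hy1)
    · rw [e1, e2 x hx1] at hxy; exact absurd hxy (hzp x hx1)
    · rw [e2 x hx1, e2 y hy1] at hxy; exact h.inj x hx1 y hy1 hxy
  · intro x hx y hy hxy
    rcases mem_insert.1 hx with rfl | hx1 <;> rcases mem_insert.1 hy with rfl | hy1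
    · exact absurd rfl hxy
    · rw [e2 y hy1]
      obtain ⟨i, h1, h2, h3⟩ := hF y hy1
      exact ⟨i, h3, h2, Or.inr h1⟩
    · rw [e1]
      obtain ⟨i, h1, h2, h3⟩ := hT x hx1
      exact ⟨i, h2, h3, Or.inl h1⟩
    · rw [e2 y hy1]; exact h.help x hx1 y hy1 hxy

theorem StA.ext2 {ι : Type u} {R : ι → ι → Prop} {V : Finset ι} {p : ι → ι}
    {w w' : ι → Option (ι × Bool)} (h : StA R V p w) (h1 : ∀ i, w i ≠ none → w' i = w i)
    (h2 : ∀ v ∈ V, w' v = none) (h3 : ∀ v ∈ V, w' (p v) = none) : StA R V p w' := by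
  refine ⟨h.arc, h.pV, h2, h3, h.inj, ?_⟩
  intro x hx y hy hxy
  obtain ⟨i, a, b, c⟩ := h.help x hx y hy hxy
  have hw : w i ≠ none := by rcases c with c | c <;> simp [c]
  refine ⟨i, a, b, ?_⟩
  rw [h1 i hw]; exact c

structure St {ι : Type u} [Fintype ι] (R : ι → ι → Prop) (k : ℕ) (V : Finset ι) (p : ι → ι)
    (w : ι → Option (ι × Bool)) : Prop where
  base : StA R V p w
  cnt : (univ.filter (fun i => w i ≠ none)).card ≤ 2 * k * V.card
  poolT : ∀ v ∈ V, k ≤ (univ.filter (fun i => w i = some (v, true) ∧ R v i)).card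
  poolF : ∀ v ∈ V, k ≤ (univ.filter (fun i => w i = some (v, false) ∧ R i (p v))).card

theorem low {ι : Type u} [Fintype ι] (R : ι → ι → Prop) (k D : ℕ)
    (hs : ∀ J : Finset ι, k ≤ J.card → (oN R J)ᶜ.card ≤ D) (F : Finset ι) (m : ℕ)
    (hF : D + k * m < F.card) :
    (univ.filter (fun z => (F.filter (fun i => i ≠ z ∧ R z i)).card < m)).card < k := by
  by_contra hcon
  push Not at hcon
  obtain ⟨J, hJ, hJk⟩ := exists_subset_card_eq hcon
  have h1 := hs J hJk.ge
  have h2 : F ⊆ (oN R J)ᶜ ∪ J.biUnion (fun z => insert z (F.filter (fun i => i ≠ z ∧ R z i))) := by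
    intro i hi
    by_cases hh : i ∈ oN R J
    · obtain ⟨z, hz, hzi⟩ := mem_oN.1 hh
      refine mem_union_right _ (mem_biUnion.2 ⟨z, hz, ?_⟩)
      by_cases hiz : i = z
      · simp [hiz]
      · simp [hiz, hi, hzi]
    · exact mem_union_left _ (mem_compl.2 hh)
  have h3 : (J.biUnion (fun z => insert z (F.filter (fun i => i ≠ z ∧ R z i)))).card ≤ J.card * m := by
    apply card_biUnion_le_card_mul
    intro z hz
    have := hJ hz
    simp only [mem_filter, mem_univ, true_and] at this
    exact (card_insert_le _ _).trans this
  have h4 := (card_le_card h2).trans (card_union_le _ _)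
  rw [hJk] at h3
  omega

theorem bad_card {ι : Type u} [Fintype ι] (R : ι → ι → Prop) (k D : ℕ)
    (hs : ∀ J : Finset ι, k ≤ J.card → (oN R J)ᶜ.card ≤ D) (V : Finset ι) (pool : ι → Finset ι)
    (hp : ∀ v ∈ V, k ≤ (pool v).card) :
    (univ.filter (fun z => ∃ v ∈ V, z ∉ oN R (pool v))).card ≤ V.card * D := by
  have : univ.filter (fun z => ∃ v ∈ V, z ∉ oN R (pool v)) ⊆ V.biUnion (fun v => (oN R (pool v))ᶜ) := by
    intro z hz
    simp only [mem_filter, mem_univ, true_and] at hz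
    obtain ⟨v, hv, h⟩ := hz
    exact mem_biUnion.2 ⟨v, hv, mem_compl.2 h⟩
  exact (card_le_card this).trans (card_biUnion_le_card_mul _ _ _ fun v hv => hs _ (hp v hv))

theorem free_card {ι : Type u} [Fintype ι] {R : ι → ι → Prop} {k : ℕ} {V : Finset ι} {p : ι → ι}
    {w : ι → Option (ι × Bool)} (h : St R k V p w) :
    Fintype.card ι ≤ (univ.filter (fun i => w i = none ∧ i ∉ V ∧ ∀ x ∈ V, p x ≠ i)).card
      + (2 * k + 2) * V.card := by
  have : (univ : Finset ι) ⊆ (univ.filter (fun i => w i = none ∧ i ∉ V ∧ ∀ x ∈ V, p x ≠ i)) ∪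
      (univ.filter (fun i => w i ≠ none) ∪ (V ∪ V.image p)) := by
    intro i _
    simp only [mem_union, mem_filter, mem_univ, true_and, mem_image]
    by_cases h1 : w i = none
    · by_cases h2 : i ∈ V
      · tauto
      · by_cases h3 : ∃ x ∈ V, p x = i
        · tauto
        · left; push Not at h3; exact ⟨h1, h2, h3⟩
    · tauto
  have h1 := card_le_card this
  have h2 := h.cnt
  have h3 := card_union_le (univ.filter (fun i => w i = none ∧ i ∉ V ∧ ∀ x ∈ V, p x ≠ i))
    (univ.filter (fun i => w i ≠ none) ∪ (V ∪ V.image p))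
  have h4 := card_union_le (univ.filter (fun i => w i ≠ none)) (V ∪ V.image p)
  have h5 := card_union_le V (V.image p)
  have h6 : (V.image p).card ≤ V.card := card_image_le
  rw [card_univ] at h1
  have : (2 * k + 2) * V.card = 2 * k * V.card + 2 * V.card := by ring
  omega

theorem sdiff_ge {ι : Type u} (A B : Finset ι) : A.card ≤ (A \ B).card + B.card := by
  have := card_le_card (show A ⊆ (A \ B) ∪ B by intro x hx; by_cases h : x ∈ B <;> simp [h, hx])
  exact this.trans (card_union_le _ _)

theorem pick {ι : Type u} (A B : Finset ι) (h : B.card < A.card) : ∃ x ∈ A, x ∉ B := by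
  by_contra hcon
  push Not at hcon
  have := card_le_card (show A ⊆ B from hcon)
  omega

end comb3

section comb4
open Finset Classical

theorem step {ι : Type u} [Fintype ι] {R : ι → ι → Prop} (C k : ℕ) (hk : k = 4 * C + 1)
    (hs1 : ∀ J : Finset ι, k ≤ J.card → (oN R J)ᶜ.card ≤ 4 * C)
    (hs2 : ∀ J : Finset ι, k ≤ J.card → (oN (fun i j => R j i) J)ᶜ.card ≤ 4 * C)
    (hN : 28 * C ^ 2 + 7 * C + 1 < Fintype.card ι)
    {V : Finset ι} {p : ι → ι} {w : ι → Option (ι × Bool)} (h : St R k V p w) (hr : V.card + 1 ≤ C) :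
    ∃ v z w', v ∉ V ∧ St R k (insert v V) (Function.update p v z) w' := by
  have hfree := free_card h
  set F := univ.filter (fun i => w i = none ∧ i ∉ V ∧ ∀ x ∈ V, p x ≠ i) with hF
  have memF : ∀ i, i ∈ F ↔ (w i = none ∧ i ∉ V ∧ ∀ x ∈ V, p x ≠ i) := by intro i; simp [hF]
  have bz := bad_card R k (4 * C) hs1 V _ h.poolT
  have bv := bad_card (fun i j => R j i) k (4 * C) hs2 V _ h.poolF
  set badz := univ.filter (fun z => ∃ v ∈ V, z ∉ oN R (univ.filter (fun i => w i = some (v, true) ∧ R v i))) with hbadz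
  set badv := univ.filter (fun z => ∃ v ∈ V, z ∉ oN (fun i j => R j i) (univ.filter (fun i => w i = some (v, false) ∧ R i (p v)))) with hbadv
  set r := V.card with hrdef
  obtain ⟨e, he⟩ : ∃ e, C = r + 1 + e := ⟨C - (r + 1), by omega⟩
  have n1 : 4 * C + k * (k + 1) < F.card := by subst hk; subst he; nlinarith
  have n2 : 4 * C + k * k + r * (4 * C) < F.card := by subst hk; subst he; nlinarith
  have n3 : 4 * C + k * k + k + 2 < F.card := by subst hk; subst he; nlinarith
  have n4 : r * (4 * C) + k + k < F.card := by subst hk; subst he; nlinarith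
  have l1 := low (fun i j => R j i) k (4 * C) hs2 F (k + 1) n1
  have n2' : 4 * C + k * k < (F \ badv).card := by
    have := sdiff_ge F badv; omega
  have l2 := low R k (4 * C) hs1 (F \ badv) k n2'
  obtain ⟨z, hzF, hz⟩ := pick F (badz ∪ (univ.filter (fun z => (F.filter (fun i => i ≠ z ∧ R i z)).card < k + 1)
     ∪ univ.filter (fun z => ((F \ badv).filter (fun i => i ≠ z ∧ R z i)).card < k))) (by
    refine lt_of_le_of_lt (card_union_le _ _) ?_
    have := card_union_le (univ.filter (fun z => (F.filter (fun i => i ≠ z ∧ R i z)).card < k + 1))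
     (univ.filter (fun z => ((F \ badv).filter (fun i => i ≠ z ∧ R z i)).card < k))
    omega)
  simp only [mem_union, mem_filter, mem_univ, true_and, not_or, not_lt] at hz
  obtain ⟨hzb, hz1, hz2⟩ := hz
  obtain ⟨G', hG', hG'c⟩ := exists_subset_card_eq hz1
  have l3 := low R k (4 * C) hs1 ((F \ G') \ {z}) k (by
    have := sdiff_ge F G'
    have := sdiff_ge (F \ G') {z}
    rw [card_singleton] at this
    omega)
  obtain ⟨v, hvm, hvL⟩ := pick _ _ (lt_of_lt_of_le l3 hz2)
  simp only [mem_filter, mem_univ, true_and, not_lt, mem_sdiff] at hvm hvL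
  obtain ⟨⟨hvF, hvb⟩, hvz, hRzv⟩ := hvm
  obtain ⟨E, hE, hEc⟩ := exists_subset_card_eq hvL
  obtain ⟨G, hG, hGc⟩ := exists_subset_card_eq (show k ≤ (G' \ {v}).card by
    have := sdiff_ge G' {v}
    rw [card_singleton] at this
    omega)
  have hGm : ∀ i ∈ G, i ∈ F ∧ i ≠ z ∧ R i z ∧ i ≠ v ∧ i ∈ G' := by
    intro i hi
    have h1 := hG hi
    rw [mem_sdiff, mem_singleton] at h1
    have h2 := hG' h1.1
    rw [mem_filter] at h2
    exact ⟨h2.1, h2.2.1, h2.2.2, h1.2, h1.1⟩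
  have hEm : ∀ i ∈ E, i ∈ F ∧ i ≠ z ∧ R v i ∧ i ≠ v ∧ i ∉ G' := by
    intro i hi
    have h1 := hE hi
    simp only [mem_filter, mem_sdiff, mem_singleton] at h1
    tauto
  have hzF' := (memF z).1 hzF
  have hvF' := (memF v).1 hvF
  have b1 := h.base.ext1 z v hvF'.2.1 hzF'.2.1 (Ne.symm hvz) hvF'.1 hzF'.1 hzF'.2.2 hvF'.2.2 hRzv
    (by
      intro x hx
      by_contra hcon
      apply hzb
      rw [hbadz, mem_filter]
      refine ⟨mem_univ _, x, hx, fun hh => hcon ?_⟩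
      obtain ⟨i, hi, hiz⟩ := mem_oN.1 hh
      rw [mem_filter] at hi
      exact ⟨i, hi.2.1, hi.2.2, hiz⟩)
    (by
      intro x hx
      by_contra hcon
      apply hvb
      rw [hbadv, mem_filter]
      refine ⟨mem_univ _, x, hx, fun hh => hcon ?_⟩
      obtain ⟨i, hi, hiz⟩ := mem_oN.1 hh
      rw [mem_filter] at hi
      exact ⟨i, hi.2.1, hi.2.2, hiz⟩)
  have hvV := hvF'.2.1
  set w' : ι → Option (ι × Bool) := fun i => if i ∈ G then some (v, false) else if i ∈ E then some (v, true) else w i with hw'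
  have wG : ∀ i ∈ G, w' i = some (v, false) := by intro i hi; simp [hw', hi]
  have wE : ∀ i ∈ E, w' i = some (v, true) := by
    intro i hi
    have : i ∉ G := fun hh => (hEm i hi).2.2.2.2 (hGm i hh).2.2.2.2
    simp [hw', hi, this]
  have wO : ∀ i, i ∉ G → i ∉ E → w' i = w i := by intro i h1 h2; simp [hw', h1, h2]
  have wK : ∀ i, i ∉ F → w' i = w i := fun i hi => wO i (fun hh => hi (hGm i hh).1) (fun hh => hi (hEm i hh).1)
  have e1 : Function.update p v z v = z := by simp
  have e2 : ∀ x ∈ V, Function.update p v z x = p x := by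
    intro x hx
    rw [Function.update_of_ne]
    rintro rfl; exact hvV hx
  have wv : w' v = none := (wO v (fun hh => (hGm v hh).2.2.2.1 rfl) (fun hh => (hEm v hh).2.2.2.1 rfl)).trans hvF'.1
  have wz : w' z = none := (wO z (fun hh => (hGm z hh).2.1 rfl) (fun hh => (hEm z hh).2.1 rfl)).trans hzF'.1
  have wne : ∀ i, w i ≠ none → w' i = w i := fun i hi => wK i (fun hh => hi ((memF i).1 hh).1)
  refine ⟨v, z, w', hvV, ?_, ?_, ?_, ?_⟩
  · refine b1.ext2 wne ?_ ?_
    · intro x hx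
      rcases mem_insert.1 hx with rfl | hx
      · exact wv
      · rw [wK x (fun hh => ((memF x).1 hh).2.1 hx)]; exact h.base.wV x hx
    · intro x hx
      rcases mem_insert.1 hx with rfl | hx
      · rw [e1]; exact wz
      · rw [e2 x hx, wK (p x) (fun hh => ((memF (p x)).1 hh).2.2 x hx rfl)]; exact h.base.wp x hx
  · have : univ.filter (fun i => w' i ≠ none) ⊆ univ.filter (fun i => w i ≠ none) ∪ (G ∪ E) := by
      intro i hi
      simp only [mem_filter, mem_univ, true_and, mem_union] at hi ⊢
      by_cases h1 : i ∈ G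
      · tauto
      · by_cases h2 : i ∈ E
        · tauto
        · rw [wO i h1 h2] at hi; tauto
    have c1 := card_le_card this
    have c2 := card_union_le (univ.filter (fun i => w i ≠ none)) (G ∪ E)
    have c3 := card_union_le G E
    have c4 := h.cnt
    rw [card_insert_of_notMem hvV]
    have : 2 * k * (V.card + 1) = 2 * k * V.card + 2 * k := by ring
    omega
  · intro x hx
    rcases mem_insert.1 hx with rfl | hx
    · rw [← hEc]
      apply card_le_card
      intro i hi
      rw [mem_filter]
      exact ⟨mem_univ _, wE i hi, (hEm i hi).2.2.1⟩
    · refine (h.poolT x hx).trans (card_le_card ?_)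
      intro i hi
      rw [mem_filter] at hi ⊢
      refine ⟨mem_univ _, ?_, hi.2.2⟩
      rw [wne i (by rw [hi.2.1]; simp)]; exact hi.2.1
  · intro x hx
    rcases mem_insert.1 hx with rfl | hx
    · rw [← hGc]
      apply card_le_card
      intro i hi
      rw [mem_filter, e1]
      exact ⟨mem_univ _, wG i hi, (hGm i hi).2.2.1⟩
    · refine (h.poolF x hx).trans (card_le_card ?_)
      intro i hi
      rw [mem_filter] at hi ⊢
      rw [e2 x hx]
      refine ⟨mem_univ _, ?_, hi.2.2⟩
      rw [wne i (by rw [hi.2.1]; simp)]; exact hi.2.1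

theorem last {ι : Type u} [Fintype ι] {R : ι → ι → Prop} (C k : ℕ) (hk : k = 4 * C + 1)
    (hs1 : ∀ J : Finset ι, k ≤ J.card → (oN R J)ᶜ.card ≤ 4 * C)
    (hs2 : ∀ J : Finset ι, k ≤ J.card → (oN (fun i j => R j i) J)ᶜ.card ≤ 4 * C)
    (hC : 1 ≤ C)
    (hN : 28 * C ^ 2 + 7 * C + 1 < Fintype.card ι)
    {V : Finset ι} {p : ι → ι} {w : ι → Option (ι × Bool)} (h : St R k V p w) (hr : V.card = C) :
    ∃ v z, v ∉ V ∧ StA R (insert v V) (Function.update p v z) w := by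
  have hfree := free_card h
  set F := univ.filter (fun i => w i = none ∧ i ∉ V ∧ ∀ x ∈ V, p x ≠ i) with hF
  have memF : ∀ i, i ∈ F ↔ (w i = none ∧ i ∉ V ∧ ∀ x ∈ V, p x ≠ i) := by intro i; simp [hF]
  have bz := bad_card R k (4 * C) hs1 V _ h.poolT
  have bv := bad_card (fun i j => R j i) k (4 * C) hs2 V _ h.poolF
  set badz := univ.filter (fun z => ∃ v ∈ V, z ∉ oN R (univ.filter (fun i => w i = some (v, true) ∧ R v i))) with hbadz
  set badv := univ.filter (fun z => ∃ v ∈ V, z ∉ oN (fun i j => R j i) (univ.filter (fun i => w i = some (v, false) ∧ R i (p v)))) with hbadv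
  rw [hr] at hfree bz bv
  have n1 : C * (4 * C) + k + 4 * C < F.card := by subst hk; nlinarith
  obtain ⟨Z, hZ, hZc⟩ := exists_subset_card_eq (show k ≤ (F \ badz).card by
    have := sdiff_ge F badz; omega)
  obtain ⟨v, hvm, hvo⟩ := pick ((F \ badv) \ Z) (oN R Z)ᶜ (by
    have := sdiff_ge F badv
    have := sdiff_ge (F \ badv) Z
    have := hs1 Z hZc.ge
    omega)
  rw [mem_compl, not_not] at hvo
  obtain ⟨z, hz, hRzv⟩ := mem_oN.1 hvo
  have hz' := hZ hz
  rw [mem_sdiff] at hz' hvm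
  rw [mem_sdiff] at hvm
  obtain ⟨⟨hvF, hvb⟩, hvZ⟩ := hvm
  obtain ⟨hzF, hzb⟩ := hz'
  have hzF' := (memF z).1 hzF
  have hvF' := (memF v).1 hvF
  have hzv : z ≠ v := by rintro rfl; exact hvZ hz
  exact ⟨v, z, hvF'.2.1, h.base.ext1 z v hvF'.2.1 hzF'.2.1 hzv hvF'.1 hzF'.1 hzF'.2.2 hvF'.2.2 hRzv
    (by
      intro x hx
      by_contra hcon
      apply hzb
      rw [hbadz, mem_filter]
      refine ⟨mem_univ _, x, hx, fun hh => hcon ?_⟩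
      obtain ⟨i, hi, hiz⟩ := mem_oN.1 hh
      rw [mem_filter] at hi
      exact ⟨i, hi.2.1, hi.2.2, hiz⟩)
    (by
      intro x hx
      by_contra hcon
      apply hvb
      rw [hbadv, mem_filter]
      refine ⟨mem_univ _, x, hx, fun hh => hcon ?_⟩
      obtain ⟨i, hi, hiz⟩ := mem_oN.1 hh
      rw [mem_filter] at hi
      exact ⟨i, hi.2.1, hi.2.2, hiz⟩)⟩

theorem greedy {ι : Type u} [Fintype ι] {R : ι → ι → Prop} (hR : ∀ i, R i i) (C : ℕ) (hC : 1 ≤ C)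
    (hs1 : ∀ J : Finset ι, 4 * C + 1 ≤ J.card → (oN R J)ᶜ.card ≤ 4 * C)
    (hs2 : ∀ J : Finset ι, 4 * C + 1 ≤ J.card → (oN (fun i j => R j i) J)ᶜ.card ≤ 4 * C)
    (hN : 28 * C ^ 2 + 7 * C + 1 < Fintype.card ι) : Save R (C + 1) := by
  have key : ∀ r ≤ C, ∃ V p w, St R (4 * C + 1) V p w ∧ V.card = r := by
    intro r
    induction r with
    | zero =>
      intro _
      refine ⟨∅, id, fun _ => none, ⟨⟨?_, ?_, ?_, ?_, ?_, ?_⟩, ?_, ?_, ?_⟩, rfl⟩ <;> simp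
    | succ r ih =>
      intro hr
      obtain ⟨V, p, w, h, hV⟩ := ih (by omega)
      obtain ⟨v, z, w', hv, h'⟩ := step C (4 * C + 1) rfl hs1 hs2 hN h (by omega)
      exact ⟨_, _, _, h', by rw [card_insert_of_notMem hv, hV]⟩
  obtain ⟨V, p, w, h, hV⟩ := key C le_rfl
  obtain ⟨v, z, hv, h'⟩ := last C (4 * C + 1) rfl hs1 hs2 hC hN h hV
  have := h'.save hR
  rwa [card_insert_of_notMem hv, hV] at this
end comb4

section comb5
open Finset Classical

theorem max_save {ι : Type u} (R : ι → ι → Prop) (hR : ∀ i, R i i) (C : ℕ)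
    (h : ∀ s, Save R s → s ≤ C) : ∃ C1, Save R C1 ∧ ∀ s, Save R s → s ≤ C1 :=
  ⟨Nat.findGreatest (Save R) C, Nat.findGreatest_spec (Nat.zero_le C) (save_zero R hR),
    fun s hs => Nat.le_findGreatest (h s hs) hs⟩

theorem kernel (C : ℕ) : ∀ (ι : Type u) [Fintype ι] (R : ι → ι → Prop) (_ : ∀ i, R i i)
    (μ : ι → ι) (_ : ∀ i, μ (μ i) = i) (_ : ∀ i, μ i ≠ i) (_ : ∀ i, R i (μ i) ∨ R (μ i) i)
    (_ : ∀ s, Save R s → s ≤ C), Fintype.card ι ≤ 28 * C ^ 2 + 7 * C + 1 := by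
  induction C using Nat.strong_induction_on with
  | _ C ih =>
  intro ι _ R hR μ inv fpf adj hS
  by_contra hN
  push Not at hN
  have arc1 : ∀ i, R i (μ i) ∨ R (μ i) i → Save R 1 := by
    intro i h
    rcases h with h | h
    · exact save_one R hR _ _ (fpf i).symm h
    · exact save_one R hR _ _ (fpf i) h
  have hC : 1 ≤ C := by
    obtain ⟨i⟩ : Nonempty ι := Fintype.card_pos_iff.1 (by omega)
    exact hS 1 (arc1 i (adj i))
  have hT := noT1_of_save R C hS
  have hT' := noT1_flip R C hT
  by_cases hsp : ∃ X Q : Finset ι, (∀ x ∈ X, ∀ q ∈ Q, ¬ R x q ∧ ¬ R q x) ∧ 2 * C < X.card ∧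
      2 * C < Q.card ∧ (X ∪ Q)ᶜ.card ≤ 2 * C
  · obtain ⟨X, Q, hno, hX, hQ, hrem⟩ := hsp
    have hdisj : Disjoint X Q := by
      rw [Finset.disjoint_left]
      intro i hi hq
      exact (hno i hi i hq).1 (hR i)
    set X1 := X.filter (fun i => μ i ∈ X) with hX1
    set Q1 := Q.filter (fun i => μ i ∈ Q) with hQ1
    have hinj : Function.Injective μ := fun a b h => by rw [← inv a, h, inv b]
    have himg : ((X \ X1) ∪ (Q \ Q1)).image μ ⊆ (X ∪ Q)ᶜ := by
      intro j hj
      obtain ⟨i, hi, rfl⟩ := mem_image.1 hj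
      rw [mem_union, mem_sdiff, mem_sdiff, hX1, hQ1, mem_filter, mem_filter] at hi
      rw [mem_compl, mem_union, not_or]
      have := adj i
      rcases hi with ⟨h1, h2⟩ | ⟨h1, h2⟩
      · refine ⟨by tauto, fun hh => ?_⟩
        have := hno i h1 _ hh
        tauto
      · refine ⟨fun hh => ?_, by tauto⟩
        have := hno _ hh _ h1
        tauto
    have c1 := card_le_card himg
    rw [card_image_of_injective _ hinj, card_union_of_disjoint (hdisj.mono sdiff_subset sdiff_subset)] at c1
    have c2 := sdiff_ge X X1
    have c3 := sdiff_ge Q Q1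
    have c4 : Fintype.card ι = (X ∪ Q)ᶜ.card + (X ∪ Q).card := by
      rw [card_compl]; have := card_le_univ (X ∪ Q); omega
    rw [card_union_of_disjoint hdisj] at c4
    have sub : ∀ (Y Z : Finset ι), Z = Y.filter (fun i => μ i ∈ Y) → 0 < Z.card →
        ∃ C1, 1 ≤ C1 ∧ SaveOn R Z C1 ∧ (C1 < C → Z.card ≤ 28 * C1 ^ 2 + 7 * C1 + 1) := by
      intro Y Z hZ hpos
      have hμ : ∀ i ∈ Z, μ i ∈ Z := by
        intro i hi
        rw [hZ, mem_filter] at hi ⊢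
        exact ⟨hi.2, by rw [inv]; exact hi.1⟩
      obtain ⟨C1, h1, h2⟩ := max_save (fun i j : {x // x ∈ Z} => R i j) (fun i => hR i) C
        (fun s hs => hS s (save_of_saveOn R hR Z s (saveOn_of_sub R Z s hs)))
      refine ⟨C1, ?_, saveOn_of_sub R Z C1 h1, ?_⟩
      · obtain ⟨i, hi⟩ := card_pos.1 hpos
        apply h2
        have hne : (⟨i, hi⟩ : {x // x ∈ Z}) ≠ ⟨μ i, hμ i hi⟩ := by
          intro hh; exact (fpf i).symm (congrArg Subtype.val hh)
        rcases adj i with h | h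
        · exact save_one (fun i j : {x // x ∈ Z} => R i j) (fun i => hR i) ⟨i, hi⟩ ⟨μ i, hμ i hi⟩ hne h
        · exact save_one (fun i j : {x // x ∈ Z} => R i j) (fun i => hR i) ⟨μ i, hμ i hi⟩ ⟨i, hi⟩ hne.symm h
      · intro hlt
        have := ih C1 hlt {x // x ∈ Z} (fun i j => R i j) (fun i => hR i) (fun i => ⟨μ i, hμ i i.2⟩)
          (fun i => Subtype.ext (inv i)) (fun i hh => fpf i (congrArg Subtype.val hh))
          (fun i => adj i) h2
        simpa using this
    obtain ⟨C1, p1, s1, b1⟩ := sub X X1 hX1 (by omega)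
    obtain ⟨C2, p2, s2, b2⟩ := sub Q Q1 hQ1 (by omega)
    have hsum := hS _ (save_of_saveOn R hR _ _ (saveOn_add R X1 Q1 C1 C2
      (hdisj.mono (filter_subset _ _) (filter_subset _ _))
      (fun x hx q hq => hno x (mem_filter.1 hx).1 q (mem_filter.1 hq).1) s1 s2))
    have b1' := b1 (by omega)
    have b2' := b2 (by omega)
    obtain ⟨e, rfl⟩ := Nat.exists_eq_add_of_le hsum
    obtain ⟨x, rfl⟩ := Nat.exists_eq_add_of_le p1
    obtain ⟨y, rfl⟩ := Nat.exists_eq_add_of_le p2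
    nlinarith [Nat.zero_le (x * y), Nat.zero_le (x * e), Nat.zero_le (y * e), Nat.zero_le (e * e)]
  · have := hS _ (greedy hR C hC (by
      intro J hJ
      by_contra hcon
      push Not at hcon
      obtain ⟨X, Q, h1, h2⟩ := split (fun i j => R j i) hR C hT' J hJ (by
        rw [card_compl] at hcon
        change (oN R J).card + 4 * C < _
        omega)
      exact hsp ⟨X, Q, fun x hx q hq => (h1 x hx q hq).symm, h2⟩) (by
      intro J hJ
      by_contra hcon
      push Not at hcon
      obtain ⟨X, Q, h1, h2⟩ := split R hR C hT J hJ (by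
        rw [card_compl] at hcon
        omega)
      exact hsp ⟨X, Q, h1, h2⟩) hN)
    omega

theorem maxmatch {ι : Type u} [Fintype ι] (R : ι → ι → Prop) :
    ∃ K : Finset ι, ∃ μ : ι → ι, (∀ i ∈ K, μ i ∈ K ∧ μ (μ i) = i ∧ μ i ≠ i ∧ (R i (μ i) ∨ R (μ i) i)) ∧
      ∀ i, i ∉ K → ∀ j, j ∉ K → i ≠ j → ¬ R i j := by
  obtain ⟨K, hK, hmax⟩ := Finset.exists_max_image (univ.filter (fun K : Finset ι => ∃ μ : ι → ι,
    (∀ i ∈ K, μ i ∈ K ∧ μ (μ i) = i ∧ μ i ≠ i ∧ (R i (μ i) ∨ R (μ i) i)))) card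
    ⟨∅, by rw [mem_filter]; exact ⟨mem_univ _, id, by simp⟩⟩
  rw [mem_filter] at hK
  obtain ⟨-, μ, hμ⟩ := hK
  refine ⟨K, μ, hμ, ?_⟩
  intro i hi j hj hij hR
  have := hmax (insert i (insert j K)) (by
    rw [mem_filter]
    refine ⟨mem_univ _, fun x => if x = i then j else if x = j then i else μ x, ?_⟩
    intro x hx
    have hji := hij.symm
    by_cases h1 : x = i
    · subst h1; simp [hji, hR]
    · by_cases h2 : x = j
      · subst h2; simp [hji, hR, hij]
      · have hxK : x ∈ K := by simpa [h1, h2] using hx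
        obtain ⟨a, b, c, d⟩ := hμ x hxK
        have h3 : μ x ≠ i := by intro h; rw [h] at a; exact hi a
        have h4 : μ x ≠ j := by intro h; rw [h] at a; exact hj a
        simp [h1, h2, h3, h4, a, b, c, d])
  rw [card_insert_of_notMem (by simp [hij, hi]), card_insert_of_notMem hj] at this
  omega

theorem indep {ι : Type u} [Fintype ι] (R : ι → ι → Prop) (hR : ∀ i, R i i) (C : ℕ)
    (hS : ∀ s, Save R s → s ≤ C) :
    ∃ T : Finset ι, (∀ i ∈ T, ∀ j ∈ T, i ≠ j → ¬ R i j) ∧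
      Fintype.card ι ≤ T.card + (28 * C ^ 2 + 7 * C + 1) := by
  obtain ⟨K, μ, h1, h2⟩ := maxmatch R
  refine ⟨Kᶜ, fun i hi j hj => h2 i (mem_compl.1 hi) j (mem_compl.1 hj), ?_⟩
  have := kernel C {x // x ∈ K} (fun i j => R i j) (fun i => hR i) (fun i => ⟨μ i, (h1 i i.2).1⟩)
    (fun i => Subtype.ext (h1 i i.2).2.1) (fun i hh => (h1 i i.2).2.2.1 (congrArg Subtype.val hh))
    (fun i => (h1 i i.2).2.2.2)
    (fun s hs => hS s (save_of_saveOn R hR K s (saveOn_of_sub R K s hs)))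
  rw [Fintype.card_coe] at this
  rw [card_compl]
  have := card_le_univ K
  omega
end comb5

set_option linter.unusedSectionVars false
section pos1
open Finset Classical
variable {α : Type u} [PartialOrder α] [Fintype α]

noncomputable def lex2 (f g : α → ℕ) (x : α) : ℕ :=
  (univ.filter (fun z => f z < f x ∨ (f z = f x ∧ g z < g x))).card

theorem lex2_mono (f g : α → ℕ) (x y : α) (h : f x < f y ∨ (f x = f y ∧ g x ≤ g y)) :
    lex2 f g x ≤ lex2 f g y := by
  apply card_le_card
  intro z hz
  simp only [mem_filter, mem_univ, true_and] at hz ⊢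
  omega

theorem lex2_strict (f g : α → ℕ) (x y : α) (h : f x < f y ∨ (f x = f y ∧ g x < g y)) :
    lex2 f g x < lex2 f g y := by
  apply card_lt_card
  rw [Finset.ssubset_iff_of_subset]
  · exact ⟨x, by simpa using h, by simp⟩
  · intro z hz
    simp only [mem_filter, mem_univ, true_and] at hz ⊢
    omega

theorem lex2_lt (f g : α → ℕ) (x y : α) :
    lex2 f g x < lex2 f g y ↔ (f x < f y ∨ (f x = f y ∧ g x < g y)) := by
  constructor
  · intro h
    by_contra hcon
    have := lex2_mono f g y x (by omega)
    omega
  · exact lex2_strict f g x y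

theorem lex2_le (f g : α → ℕ) (x y : α) :
    lex2 f g x ≤ lex2 f g y ↔ (f x < f y ∨ (f x = f y ∧ g x ≤ g y)) := by
  have := lex2_lt f g y x
  constructor
  · intro h
    by_contra hcon
    have := this.2 (by omega)
    omega
  · exact lex2_mono f g x y

theorem exists_linext (α : Type u) [PartialOrder α] [Fintype α] :
    ∃ e : α → ℕ, Function.Injective e ∧ Monotone e := by
  let r : α → LinearExtension α := toLinearExtension
  have hr : Monotone r := toLinearExtension.monotone
  have hri : Function.Injective r := fun a b h => h
  have hle : ∀ x y, r x ≤ r y → (univ.filter (fun z => r z < r x)).card ≤ (univ.filter (fun z => r z < r y)).card := by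
    intro x y h
    apply card_le_card
    intro z hz
    simp only [mem_filter, mem_univ, true_and] at hz ⊢
    exact lt_of_lt_of_le hz h
  have hlt : ∀ x y, r x < r y → (univ.filter (fun z => r z < r x)).card < (univ.filter (fun z => r z < r y)).card := by
    intro x y h
    apply card_lt_card
    rw [Finset.ssubset_iff_of_subset]
    · exact ⟨x, by simpa using h, by simp⟩
    · intro z hz
      simp only [mem_filter, mem_univ, true_and] at hz ⊢
      exact hz.trans h
  refine ⟨fun x => (univ.filter (fun z => r z < r x)).card, ?_, ?_⟩
  · intro x y hxy
    by_contra hne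
    rcases lt_or_gt_of_ne (fun h => hne (hri h) : r x ≠ r y) with h | h
    · have := hlt x y h; simp only at hxy; omega
    · have := hlt y x h; simp only at hxy; omega
  · intro x y hxy
    exact hle x y (hr hxy)

def Cov (S : Finset α) (T : α → α → Prop) (k : ℕ) : Prop :=
  ∃ F : Finset (α → ℕ), F.card ≤ k ∧ (∀ f ∈ F, MonotoneOn f (S : Set α)) ∧
    ∀ x ∈ S, ∀ y ∈ S, T x y → ∃ f ∈ F, f y < f x

def Dm (S : Finset α) (k : ℕ) : Prop := Cov S Incomp k

theorem Cov.mono {S S' : Finset α} {T T' : α → α → Prop} {k k' : ℕ} (h : Cov S T k)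
    (hS : S' ⊆ S) (hT : ∀ x ∈ S', ∀ y ∈ S', T' x y → T x y) (hk : k ≤ k') : Cov S' T' k' := by
  obtain ⟨F, h1, h2, h3⟩ := h
  exact ⟨F, h1.trans hk, fun f hf => (h2 f hf).mono (by exact_mod_cast hS),
    fun x hx y hy hxy => h3 x (hS hx) y (hS hy) (hT x hx y hy hxy)⟩

theorem Cov.add {S : Finset α} {T T' : α → α → Prop} {k k' : ℕ} (h : Cov S T k) (h' : Cov S T' k') :
    Cov S (fun x y => T x y ∨ T' x y) (k + k') := by
  obtain ⟨F, h1, h2, h3⟩ := h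
  obtain ⟨G, g1, g2, g3⟩ := h'
  refine ⟨F ∪ G, (card_union_le _ _).trans (by omega), ?_, ?_⟩
  · intro f hf
    rcases mem_union.1 hf with hf | hf
    · exact h2 f hf
    · exact g2 f hf
  · intro x hx y hy hxy
    rcases hxy with hxy | hxy
    · obtain ⟨f, hf, h⟩ := h3 x hx y hy hxy
      exact ⟨f, mem_union_left _ hf, h⟩
    · obtain ⟨f, hf, h⟩ := g3 x hx y hy hxy
      exact ⟨f, mem_union_right _ hf, h⟩

theorem Cov.nonempty {S : Finset α} {T : α → α → Prop} {k : ℕ} (h : Cov S T k) (hk : 1 ≤ k) :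
    ∃ F : Finset (α → ℕ), F.Nonempty ∧ F.card ≤ k ∧ (∀ f ∈ F, MonotoneOn f (S : Set α)) ∧
    ∀ x ∈ S, ∀ y ∈ S, T x y → ∃ f ∈ F, f y < f x := by
  obtain ⟨F, h1, h2, h3⟩ := h
  by_cases hF : F.Nonempty
  · exact ⟨F, hF, h1, h2, h3⟩
  · rw [Finset.not_nonempty_iff_eq_empty] at hF
    subst hF
    refine ⟨{fun _ => 0}, by simp, by simpa using hk, ?_, ?_⟩
    · intro f hf
      rw [mem_singleton] at hf
      subst hf
      intro a _ b _ _; exact le_rfl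
    · intro x hx y hy hxy
      obtain ⟨f, hf, _⟩ := h3 x hx y hy hxy
      simp at hf

theorem dim_le_of_Dm (k : ℕ) (hk : 0 < k) (h : Dm (univ : Finset α) k) : dimP α ≤ k := by
  obtain ⟨e, einj, emono⟩ := exists_linext α
  obtain ⟨F, h1, h2, h3⟩ := h
  apply Nat.sInf_le
  refine ⟨hk, ?_⟩
  let E := F.equivFin
  let f : Fin k → α → ℕ := fun i => if hi : i.1 < F.card then (E.symm ⟨i.1, hi⟩).1 else e
  have fm : ∀ i x y, x ≤ y → f i x ≤ f i y := by
    intro i x y hxy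
    by_cases hi : i.1 < F.card
    · simp only [f, dif_pos hi]
      exact h2 _ (E.symm ⟨i.1, hi⟩).2 (by simp) (by simp) hxy
    · simp only [f, dif_neg hi]; exact emono hxy
  have fs : ∀ g ∈ F, ∃ i, f i = g := by
    intro g hg
    have hlt := (E ⟨g, hg⟩).2
    refine ⟨⟨(E ⟨g, hg⟩).1, hlt.trans_le h1⟩, ?_⟩
    simp [f]
  refine ⟨fun i x y => lex2 (f i) e x ≤ lex2 (f i) e y, ?_, ?_⟩
  · intro i
    refine ⟨?_, ?_⟩
    · exact
        { refl := fun a => le_rfl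
          trans := fun a b c => le_trans
          antisymm := by
            intro a b hab hba
            rw [lex2_le] at hab hba
            exact einj (by omega)
          total := fun a b => le_total _ _ }
    · intro x y hxy
      rw [lex2_le]
      have := fm i x y hxy
      have := emono hxy
      omega
  · intro x y
    constructor
    · intro hxy i
      rw [lex2_le]
      have := fm i x y hxy
      have := emono hxy
      omega
    · intro hall
      by_contra hn
      by_cases hyx : y ≤ x
      · have a1 : lex2 (f ⟨0, hk⟩) e x ≤ lex2 (f ⟨0, hk⟩) e y := hall ⟨0, hk⟩
        rw [lex2_le] at a1
        have := fm ⟨0, hk⟩ y x hyx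
        have := emono hyx
        have : e x = e y := by omega
        exact hn (einj this).le
      · obtain ⟨g, hg, hlt⟩ := h3 x (mem_univ _) y (mem_univ _) ⟨hn, hyx⟩
        obtain ⟨i, hi⟩ := fs g hg
        have a1 : lex2 (f i) e x ≤ lex2 (f i) e y := hall i
        rw [lex2_le, hi] at a1
        omega

theorem exists_bound (f : α → ℕ) : ∃ m, ∀ x, f x < m :=
  ⟨univ.sup f + 1, fun x => Nat.lt_succ_of_le (le_sup (mem_univ x))⟩

theorem Dm.insert {S : Finset α} {k : ℕ} (h : Dm S k) (hk : 1 ≤ k) (x : α) :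
    Dm (insert x S) (k + 1) := by
  by_cases hx : x ∈ S
  · rw [insert_eq_of_mem hx]
    exact Cov.mono h (Subset.refl _) (fun _ _ _ _ h => h) (by omega)
  obtain ⟨F, ⟨f, hf⟩, h1, h2, h3⟩ := Cov.nonempty h hk
  obtain ⟨m, hm⟩ := exists_bound f
  let M1 : α → ℕ := fun z => if z ≤ x then (if z = x then m else f z) else m + 1 + f z
  let M2 : α → ℕ := fun z => if x ≤ z then (if z = x then m else m + 1 + f z) else f z
  let ex : (α → ℕ) → (α → ℕ) := fun g z => if z = x then (S.filter (fun z => z ≤ x)).sup g else g z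
  refine ⟨(F.erase f).image ex ∪ {M1, M2}, ?_, ?_, ?_⟩
  · have a1 := card_union_le ((F.erase f).image ex) {M1, M2}
    have a2 : ((F.erase f).image ex).card ≤ (F.erase f).card := card_image_le
    rw [card_erase_of_mem hf] at a2
    have a3 : ({M1, M2} : Finset (α → ℕ)).card ≤ 2 := card_le_two
    have a4 : 0 < F.card := card_pos.2 ⟨f, hf⟩
    omega
  · intro g hg a ha b hb hab
    have ha' : a ≠ x → a ∈ S := by intro h; simpa [h] using ha
    have hb' : b ≠ x → b ∈ S := by intro h; simpa [h] using hb
    have hma := hm a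
    have hmb := hm b
    simp only [mem_union, mem_insert, mem_singleton, mem_image] at hg
    rcases hg with ⟨g, hg, rfl⟩ | rfl | rfl
    · have hg' := h2 g (mem_of_mem_erase hg)
      simp only [ex]
      by_cases hax : a = x <;> by_cases hbx : b = x
      · simp [hax, hbx]
      · rw [if_pos hax, if_neg hbx]
        apply Finset.sup_le
        intro z hz
        rw [mem_filter] at hz
        exact hg' (by exact_mod_cast hz.1) (by exact_mod_cast hb' hbx) (hz.2.trans (hax ▸ hab))
      · rw [if_neg hax, if_pos hbx]
        apply Finset.le_sup
        rw [mem_filter]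
        exact ⟨ha' hax, hbx ▸ hab⟩
      · rw [if_neg hax, if_neg hbx]
        exact hg' (by exact_mod_cast ha' hax) (by exact_mod_cast hb' hbx) hab
    · simp only [M1]
      by_cases hax : a = x <;> by_cases hbx : b = x
      · simp [hax, hbx]
      · subst hax
        have : ¬ b ≤ a := fun h => hbx (le_antisymm h hab)
        simp [this]; omega
      · subst hbx; simp [hab, hax]; omega
      · have := h2 f hf (by exact_mod_cast ha' hax) (by exact_mod_cast hb' hbx) hab
        have t : b ≤ x → a ≤ x := fun h => hab.trans h
        simp only [hax, hbx, if_false]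
        split_ifs <;> first | omega | tauto
    · simp only [M2]
      by_cases hax : a = x <;> by_cases hbx : b = x
      · simp [hax, hbx]
      · subst hax; simp [hab, hbx]; omega
      · subst hbx
        have : ¬ b ≤ a := fun h => hax (le_antisymm hab h)
        simp [this]; omega
      · have := h2 f hf (by exact_mod_cast ha' hax) (by exact_mod_cast hb' hbx) hab
        have t : x ≤ a → x ≤ b := fun h => h.trans hab
        simp only [hax, hbx, if_false]
        split_ifs <;> first | omega | tauto
  · intro a ha b hb hab
    have ha' : a ≠ x → a ∈ S := by intro h; simpa [h] using ha
    have hb' : b ≠ x → b ∈ S := by intro h; simpa [h] using hb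
    have hma := hm a
    have hmb := hm b
    have i1 : M1 ∈ (F.erase f).image ex ∪ {M1, M2} := by simp
    have i2 : M2 ∈ (F.erase f).image ex ∪ {M1, M2} := by simp
    by_cases hax : a = x
    · refine ⟨M2, i2, ?_⟩
      have hbx : ¬ x ≤ b := hax ▸ hab.1
      simp only [M2, hax, hbx]; simp; omega
    · by_cases hbx : b = x
      · refine ⟨M1, i1, ?_⟩
        have : ¬ a ≤ x := hbx ▸ hab.1
        simp only [M1, hbx, this]; simp; omega
      · obtain ⟨g, hg, hlt⟩ := h3 a (ha' hax) b (hb' hbx) hab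
        by_cases hgf : g = f
        · subst hgf
          by_cases hcase : a ≤ x ∧ ¬ b ≤ x
          · refine ⟨M2, i2, ?_⟩
            have t1 : ¬ x ≤ b := fun h => hab.1 (hcase.1.trans h)
            simp only [M2, hax, t1, if_false]
            split_ifs <;> omega
          · refine ⟨M1, i1, ?_⟩
            simp only [M1, hax, hbx, if_false]
            split_ifs <;> first | omega | tauto
        · refine ⟨ex g, mem_union_left _ (mem_image.2 ⟨g, mem_erase.2 ⟨hgf, hg⟩, rfl⟩), ?_⟩
          simpa [ex, hax, hbx] using hlt

theorem Dm.union {S : Finset α} {k : ℕ} (h : Dm S k) (hk : 1 ≤ k) (R : Finset α) :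
    Dm (S ∪ R) (k + R.card) := by
  induction R using Finset.induction_on with
  | empty => simpa using h
  | insert x R hx ih =>
    rw [union_insert, card_insert_of_notMem hx]
    exact Dm.insert ih (by omega) x

theorem Dm.pair {S : Finset α} {k : ℕ} {d u : α}
    (h : Dm (S \ {d, u}) k) (hk : 1 ≤ k)
    (hdm : ∀ z ∈ S, z ≤ d → z = d) (hum : ∀ z ∈ S, u ≤ z → z = u) (hdu : Incomp d u) :
    Dm S (k + 1) := by
  obtain ⟨F, ⟨f0, hf0⟩, h1, h2, h3⟩ := Cov.nonempty h hk
  have hne : u ≠ d := by rintro rfl; exact hdu.1 le_rfl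
  let ex : (α → ℕ) → (α → ℕ) := fun g z => if z = d then 0 else if z = u then univ.sup g + 2 else g z + 1
  have exs : ∀ (g : α → ℕ) (z : α), g z ≤ univ.sup g := fun g z => le_sup (mem_univ z)
  let D : α → ℕ := fun z => (if d ≤ z then 1 else 0) + (if z ≤ u then 0 else 1)
  have hmem : ∀ a ∈ S, a ≠ d → a ≠ u → a ∈ S \ {d, u} := by
    intro a h1 h2 h3; simp [h1, h2, h3]
  refine ⟨F.image ex ∪ {D}, ?_, ?_, ?_⟩
  · have a1 := card_union_le (F.image ex) {D}
    have a2 : (F.image ex).card ≤ F.card := card_image_le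
    rw [card_singleton] at a1
    omega
  · intro g hg a ha b hb hab
    simp only [mem_union, mem_singleton, mem_image] at hg
    have ha' : a ∈ S := ha
    have hb' : b ∈ S := hb
    rcases hg with ⟨g, hg, rfl⟩ | rfl
    · have hg' := h2 g hg
      simp only [ex]
      by_cases h1 : a = d
      · simp [h1]
      · have hbd : b ≠ d := by rintro rfl; exact h1 (hdm a ha' hab)
        by_cases h2 : b = u
        · have := exs g a
          simp only [h2, hne, h1, if_true, if_false]; split_ifs <;> omega
        · have hau : a ≠ u := by rintro rfl; exact h2 (hum b hb' hab)
          have := hg' (by exact_mod_cast hmem a ha' h1 hau) (by exact_mod_cast hmem b hb' hbd h2) hab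
          simp [h1, h2, hbd, hau, this]
    · simp only [D]
      have t1 : d ≤ a → d ≤ b := fun h => h.trans hab
      have t2 : b ≤ u → a ≤ u := fun h => hab.trans h
      split_ifs <;> first | omega | tauto
  · intro a ha b hb hab
    have i1 : D ∈ F.image ex ∪ {D} := by simp
    have i2 : ∀ g ∈ F, ex g ∈ F.image ex ∪ {D} := fun g hg => mem_union_left _ (mem_image_of_mem _ hg)
    have hdu1 := hdu.1
    by_cases h1 : a = d
    · subst h1
      refine ⟨D, i1, ?_⟩
      simp only [D, hab.1, hdu1]; simp; split_ifs <;> omega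
    · by_cases h2 : b = u
      · subst h2
        refine ⟨D, i1, ?_⟩
        simp only [D, hab.1, hdu1]; simp
      · by_cases h4 : b = d
        · refine ⟨ex f0, i2 _ hf0, ?_⟩
          simp only [ex, h4, h1]; simp; split_ifs <;> omega
        · by_cases h5 : a = u
          · refine ⟨ex f0, i2 _ hf0, ?_⟩
            have := exs f0 b
            simp only [ex, h4, h1, h2, h5]; simp [hne]; omega
          · obtain ⟨g, hg, hlt⟩ := h3 a (hmem a ha h1 h5) b (hmem b hb h4 h2) hab
            refine ⟨ex g, i2 _ hg, ?_⟩
            simpa [ex, h1, h2, h4, h5] using hlt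
end pos1

set_option linter.unusedSectionVars false
section pos2
open Finset Classical
variable {α : Type u} [PartialOrder α] [Fintype α]

theorem ite01 {P Q : Prop} [Decidable P] [Decidable Q] (h : P → Q) :
    (if P then 1 else 0) ≤ (if Q then 1 else 0) := by
  split_ifs <;> first | omega | tauto

theorem ite10 {P Q : Prop} [Decidable P] [Decidable Q] (h : Q → P) :
    (if P then 0 else 1) ≤ (if Q then 0 else 1) := by
  split_ifs <;> first | omega | tauto

structure Tri (D A U : Finset α) : Prop where
  dDA : ∀ x ∈ D, x ∉ A
  dDU : ∀ x ∈ D, x ∉ U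
  dAU : ∀ x ∈ A, x ∉ U
  anti : ∀ x ∈ A, ∀ y ∈ A, x ≤ y → x = y
  nad : ∀ a ∈ A, ∀ d ∈ D, ¬ a ≤ d
  nua : ∀ u ∈ U, ∀ a ∈ A, ¬ u ≤ a
  nud : ∀ u ∈ U, ∀ d ∈ D, ¬ u ≤ d

theorem Tri.sub {D A U D' A' U' : Finset α} (h : Tri D A U) (hD : D' ⊆ D) (hA : A' ⊆ A) (hU : U' ⊆ U) :
    Tri D' A' U' :=
  ⟨fun x hx hy => h.dDA x (hD hx) (hA hy), fun x hx hy => h.dDU x (hD hx) (hU hy),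
   fun x hx hy => h.dAU x (hA hx) (hU hy), fun x hx y hy => h.anti x (hA hx) y (hA hy),
   fun x hx y hy => h.nad x (hA hx) y (hD hy), fun x hx y hy => h.nua x (hU hx) y (hA hy),
   fun x hx y hy => h.nud x (hU hx) y (hD hy)⟩

theorem starCover {D A U : Finset α} (h : Tri D A U) {u1 u2 : α} (hu1 : u1 ∈ U) (hu2 : u2 ∈ U) {k : ℕ}
    (hc : Cov (D ∪ A ∪ U) (fun x y => Incomp x y ∧ (x ∈ D ∨ (y ∈ U ∧ y ≠ u1 ∧ y ≠ u2))) k) :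
    Dm (D ∪ A ∪ U) (k + 2) := by
  obtain ⟨κ, κinj, -⟩ := exists_linext α
  obtain ⟨K, hK⟩ := exists_bound κ
  let inZ : α → Prop := fun z => ∃ z', (z' ∈ A ∨ z' ∈ D) ∧ ¬ z' ≤ u1 ∧ ¬ z' ≤ u2 ∧ z ≤ z'
  let hasA : α → Prop := fun z => ∃ a ∈ A, ¬ a ≤ u1 ∧ ¬ a ≤ u2 ∧ a ≤ z
  let p1 : α → ℕ := fun z => if z ≤ u1 ∨ inZ z then 0 else 1
  let p2 : α → ℕ := fun z => (if z ≤ u2 then 0 else 1) + (if hasA z then 1 else 0)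
  let cl : α → ℕ := fun z => if z ∈ D then 0 else if z ∈ A then 1 else 2
  let q1 : α → ℕ := fun z => if z ∈ A then 1 - p1 z else 0
  let q2 : α → ℕ := fun z => if z ∈ A then 2 - p2 z else 0
  let k1 : α → ℕ := fun z => if z ∈ A then κ z else 0
  let k2 : α → ℕ := fun z => if z ∈ A then K - κ z else 0
  let f1 : α → ℕ := lex2 p1 (lex2 cl (lex2 q2 k1))
  let f2 : α → ℕ := lex2 p2 (lex2 cl (lex2 q1 k2))
  have p1le : ∀ z, p1 z ≤ 1 := by intro z; simp only [p1]; split_ifs <;> omega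
  have p2le : ∀ z, p2 z ≤ 2 := by intro z; simp only [p2]; split_ifs <;> omega
  have p1m : ∀ x y, x ≤ y → p1 x ≤ p1 y := by
    intro x y hxy
    have : (y ≤ u1 ∨ inZ y) → (x ≤ u1 ∨ inZ x) := by
      rintro (h | ⟨z, a, b, c, d⟩)
      · exact Or.inl (hxy.trans h)
      · exact Or.inr ⟨z, a, b, c, hxy.trans d⟩
    exact ite10 this
  have p2m : ∀ x y, x ≤ y → p2 x ≤ p2 y := by
    intro x y hxy
    have t1 : hasA x → hasA y := by
      rintro ⟨a, b, c, d, e⟩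
      exact ⟨a, b, c, d, e.trans hxy⟩
    have t2 : y ≤ u2 → x ≤ u2 := fun h => hxy.trans h
    exact Nat.add_le_add (ite10 t2) (ite01 t1)
  have clD : ∀ x ∈ D, cl x = 0 := by intro x hx; simp [cl, hx]
  have clA : ∀ x ∈ A, cl x = 1 := by
    intro x hx
    have : x ∉ D := fun h' => h.dDA x h' hx
    simp [cl, hx, this]
  have clU : ∀ x ∈ U, cl x = 2 := by
    intro x hx
    have h1 : x ∉ D := fun h' => h.dDU x h' hx
    have h2 : x ∉ A := fun h' => h.dAU x h' hx
    simp [cl, h1, h2]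
  have nA : ∀ x, x ∉ A → q1 x = 0 ∧ q2 x = 0 ∧ k1 x = 0 ∧ k2 x = 0 := by
    intro x hx; simp [q1, q2, k1, k2, hx]
  have yA : ∀ x ∈ A, q1 x = 1 - p1 x ∧ q2 x = 2 - p2 x ∧ k1 x = κ x ∧ k2 x = K - κ x := by
    intro x hx; simp [q1, q2, k1, k2, hx]
  have nDA : ∀ x ∈ D, x ∉ A := h.dDA
  have nUA : ∀ x ∈ U, x ∉ A := fun x hx h' => h.dAU x h' hx
  have clm : ∀ x ∈ D ∪ A ∪ U, ∀ y ∈ D ∪ A ∪ U, x ≤ y →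
      x = y ∨ cl x < cl y ∨ (cl x = cl y ∧ x ∉ A ∧ y ∉ A) := by
    intro x hx y hy hxy
    rw [mem_union, mem_union] at hx hy
    rcases hx with (hx | hx) | hx <;> rcases hy with (hy | hy) | hy
    · right; right; simp [clD x hx, clD y hy, nDA x hx, nDA y hy]
    · right; left; simp [clD x hx, clA y hy]
    · right; left; simp [clD x hx, clU y hy]
    · exact absurd hxy (h.nad x hx y hy)
    · left; exact h.anti x hx y hy hxy
    · right; left; simp [clA x hx, clU y hy]
    · exact absurd hxy (h.nud x hx y hy)
    · exact absurd hxy (h.nua x hx y hy)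
    · right; right; simp [clU x hx, clU y hy, nUA x hx, nUA y hy]
  have f1m : MonotoneOn f1 ((D ∪ A ∪ U : Finset α) : Set α) := by
    intro x hx y hy hxy
    have := p1m x y hxy
    rcases clm x hx y hy hxy with rfl | h' | ⟨h', a, b⟩
    · exact le_rfl
    · simp only [f1, lex2_le]; omega
    · have := nA x a; have := nA y b
      simp only [f1, lex2_le]; omega
  have f2m : MonotoneOn f2 ((D ∪ A ∪ U : Finset α) : Set α) := by
    intro x hx y hy hxy
    have := p2m x y hxy
    rcases clm x hx y hy hxy with rfl | h' | ⟨h', a, b⟩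
    · exact le_rfl
    · simp only [f2, lex2_le]; omega
    · have := nA x a; have := nA y b
      simp only [f2, lex2_le]; omega
  have key : ∀ y, (y ∈ A ∨ y ∈ D) → p1 y = 1 → p2 y = 0 := by
    intro y hy hp
    have hn : ¬ (y ≤ u1 ∨ inZ y) := by
      intro h'; simp [p1, h'] at hp
    rw [not_or] at hn
    have hy2 : y ≤ u2 := by
      by_contra h2
      exact hn.2 ⟨y, hy, hn.1, h2, le_rfl⟩
    have : ¬ hasA y := by
      rintro ⟨a, ha, h1, h2, h3⟩
      exact h2 (h3.trans hy2)
    simp [p2, hy2, this]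
  have base : Cov (D ∪ A ∪ U) (fun x y => Incomp x y ∧ ¬ (x ∈ D ∨ (y ∈ U ∧ y ≠ u1 ∧ y ≠ u2))) 2 := by
    refine ⟨{f1, f2}, card_le_two, ?_, ?_⟩
    · intro f hf
      rw [mem_insert, mem_singleton] at hf
      rcases hf with rfl | rfl
      · exact f1m
      · exact f2m
    · intro x hx y hy hxy
      obtain ⟨hxy, hn⟩ := hxy
      suffices f1 y < f1 x ∨ f2 y < f2 x by
        rcases this with h' | h'
        · exact ⟨f1, by simp, h'⟩
        · exact ⟨f2, by simp, h'⟩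
      rw [not_or] at hn
      have := p1le x
      have := p1le y
      have := p2le x
      have := p2le y
      have hxAU : x ∈ A ∨ x ∈ U := by
        rw [mem_union, mem_union] at hx; tauto
      by_cases hyU : y ∈ U
      · have hy12 : y = u1 ∨ y = u2 := by tauto
        rcases hy12 with rfl | rfl
        · have e1 : p1 y = 0 := by simp [p1]
          by_cases hz : inZ x
          · right
            have hxA : x ∈ A := by
              obtain ⟨z, hz, h1, h2, h3⟩ := hz
              rcases hxAU with h' | h'
              · exact h'
              · rcases hz with hz | hz
                · exact absurd h3 (h.nua x h' z hz)
                · exact absurd h3 (h.nud x h' z hz)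
            have hx2 : p2 x = 2 := by
              obtain ⟨z, hz, h1, h2, h3⟩ := hz
              have : x = z := by
                rcases hz with hz | hz
                · exact h.anti x hxA z hz h3
                · exact absurd h3 (h.nad x hxA z hz)
              subst this
              have : hasA x := ⟨x, hxA, h1, h2, le_rfl⟩
              simp [p2, h2, this]
            have hy1 : p2 y ≤ 1 := by
              have : ¬ hasA y := by
                rintro ⟨a, ha, h1, h2, h3⟩
                exact h1 h3
              simp only [p2, if_neg this]; split_ifs <;> omega
            simp only [f2, lex2_lt]; omega
          · left
            have e2 : p1 x = 1 := by simp [p1, hxy.1, hz]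
            simp only [f1, lex2_lt]; omega
        · right
          have e1 : p2 y = 0 := by
            have : ¬ hasA y := by
              rintro ⟨a, ha, h1, h2, h3⟩
              exact h2 h3
            simp [p2, this]
          have e2 : 1 ≤ p2 x := by simp [p2, hxy.1]
          simp only [f2, lex2_lt]; omega
      · have hyAD : y ∈ A ∨ y ∈ D := by
          rw [mem_union, mem_union] at hy; tauto
        have hkey := key y hyAD
        simp only [f1, f2, lex2_lt]
        rcases hxAU with hxA | hxU
        · rcases hyAD with hyA | hyD
          · have := yA x hxA
            have := yA y hyA
            have := clA x hxA
            have := clA y hyA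
            have := hK x
            have := hK y
            have hne : κ x ≠ κ y := by
              intro h'; have := κinj h'; subst this; exact hxy.1 le_rfl
            omega
          · have := clA x hxA
            have := clD y hyD
            omega
        · have := clU x hxU
          have : cl y < 2 := by
            rcases hyAD with h' | h'
            · rw [clA y h']; omega
            · rw [clD y h']; omega
          omega
  exact (Cov.add hc base).mono (Subset.refl _) (fun x _ y _ hxy => by tauto) le_rfl

theorem bipCover {A B : Finset α} (hA : ∀ x ∈ A, ∀ y ∈ A, x ≤ y → x = y) (hB : ∀ x ∈ B, ∀ y ∈ B, x ≤ y → x = y)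
    (hAB : ∀ x ∈ A, x ∉ B) (hba : ∀ b ∈ B, ∀ a ∈ A, ¬ b ≤ a) {k : ℕ} (hk : 1 ≤ k)
    (hc : Cov (A ∪ B) (fun x y => Incomp x y ∧ x ∈ A ∧ y ∈ B) k) : Dm (A ∪ B) (k + 1) := by
  obtain ⟨κ, κinj, -⟩ := exists_linext α
  obtain ⟨K, hK⟩ := exists_bound κ
  obtain ⟨F, ⟨f1, hf1⟩, h1, h2, h3⟩ := Cov.nonempty hc hk
  let Sf : α → ℕ := fun z => ∑ f ∈ F, f z
  obtain ⟨G, hG⟩ := exists_bound Sf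
  let cl : α → ℕ := fun z => if z ∈ A then 0 else 1
  let f0 : α → ℕ := lex2 cl (lex2 (fun z => G - Sf z) κ)
  let f1' : α → ℕ := lex2 f1 (lex2 cl (fun z => K - κ z))
  have clA : ∀ x ∈ A, cl x = 0 := by intro x hx; simp [cl, hx]
  have clB : ∀ x ∈ B, cl x = 1 := by
    intro x hx
    have : x ∉ A := fun h => hAB x h hx
    simp [cl, this]
  have clm : ∀ x ∈ A ∪ B, ∀ y ∈ A ∪ B, x ≤ y → x = y ∨ cl x < cl y := by
    intro x hx y hy hxy
    rw [mem_union] at hx hy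
    rcases hx with hx | hx <;> rcases hy with hy | hy
    · exact Or.inl (hA x hx y hy hxy)
    · right; rw [clA x hx, clB y hy]; omega
    · exact absurd hxy (hba x hx y hy)
    · exact Or.inl (hB x hx y hy hxy)
  refine ⟨insert f0 (insert f1' (F.erase f1)), ?_, ?_, ?_⟩
  · have a1 := card_insert_le f0 (insert f1' (F.erase f1))
    have a2 := card_insert_le f1' (F.erase f1)
    have a3 : 0 < F.card := card_pos.2 ⟨f1, hf1⟩
    rw [card_erase_of_mem hf1] at a2
    omega
  · intro f hf x hx y hy hxy
    rw [mem_insert, mem_insert] at hf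
    have hc := clm x hx y hy hxy
    rcases hf with rfl | rfl | hf
    · rcases hc with rfl | hc
      · exact le_rfl
      · simp only [f0, lex2_le]; omega
    · have := h2 f1 hf1 hx hy hxy
      rcases hc with rfl | hc
      · exact le_rfl
      · simp only [f1', lex2_le]; omega
    · exact h2 f (mem_of_mem_erase hf) hx hy hxy
  · intro x hx y hy hxy
    have i0 : f0 ∈ insert f0 (insert f1' (F.erase f1)) := by simp
    have i1 : f1' ∈ insert f0 (insert f1' (F.erase f1)) := by simp
    have good : (∃ f ∈ F, f y < f x) → ∃ f ∈ insert f0 (insert f1' (F.erase f1)), f y < f x := by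
      rintro ⟨f, hf, hlt⟩
      by_cases hff : f = f1
      · subst hff
        refine ⟨f1', i1, ?_⟩
        simp only [f1', lex2_lt]; omega
      · exact ⟨f, by simp [hff, hf], hlt⟩
    by_cases hall : ∃ f ∈ F, f y < f x
    · exact good hall
    have hcase : cl x = 1 ∧ cl y = 0 ∨ cl x = cl y := by
      rw [mem_union] at hx hy
      rcases hx with hx | hx <;> rcases hy with hy | hy
      · right; rw [clA x hx, clA y hy]
      · exact absurd (h3 x (mem_union_left _ hx) y (mem_union_right _ hy) ⟨hxy, hx, hy⟩) hall
      · left; rw [clB x hx, clA y hy]; simp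
      · right; rw [clB x hx, clB y hy]
    rcases hcase with hcase | hcase
    · refine ⟨f0, i0, ?_⟩
      simp only [f0, lex2_lt]; omega
    · push Not at hall
      have hne : κ x ≠ κ y := by
        intro h'; have := κinj h'; subst this; exact hxy.1 le_rfl
      have := hK x
      have := hK y
      have := hG x
      have := hG y
      have hS : Sf x ≤ Sf y := sum_le_sum hall
      by_cases hSe : Sf x < Sf y
      · refine ⟨f0, i0, ?_⟩
        simp only [f0, lex2_lt]; omega
      · have hfe : f1 x = f1 y := by
          have h5 := hall f1 hf1
          by_contra hne'
          have : Sf x < Sf y := sum_lt_sum hall ⟨f1, hf1, by omega⟩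
          exact hSe this
        by_cases hkk : κ y < κ x
        · refine ⟨f0, i0, ?_⟩
          simp only [f0, lex2_lt]; omega
        · refine ⟨f1', i1, ?_⟩
          simp only [f1', lex2_lt]; omega

theorem chains (U M : Finset α) (hM : M ⊆ U) (p : α → α) (hinj : ∀ x ∈ M, ∀ y ∈ M, p x = p y → x = y)
    (hp : ∀ x ∈ M, x < p x ∧ p x ∈ U) :
    ∃ κ : α → Finset α, (∀ t ∈ U \ M, ∀ x ∈ κ t, ∀ y ∈ κ t, x ≤ y ∨ y ≤ x) ∧
      ∀ u ∈ U, ∃ t ∈ U \ M, u ∈ κ t := by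
  let r : α → α → Prop := fun a b => a ∈ M ∧ b = p a
  have rle : ∀ a b, Relation.ReflTransGen r a b → a ≤ b := by
    intro a b h
    induction h with
    | refl => exact le_rfl
    | tail _ h ih => exact ih.trans (by rw [h.2]; exact (hp _ h.1).1.le)
  refine ⟨fun t => univ.filter (fun x => Relation.ReflTransGen r x t), ?_, ?_⟩
  · intro t ht x hx y hy
    simp only [mem_filter, mem_univ, true_and] at hx hy
    rw [← Relation.reflTransGen_swap] at hx hy
    have huniq : Relator.RightUnique (Function.swap r) := by
      intro a b c h1 h2
      exact hinj b h1.1 c h2.1 (h1.2.symm.trans h2.2)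
    rcases Relation.ReflTransGen.total_of_right_unique huniq hx hy with h | h
    · right; rw [Relation.reflTransGen_swap] at h; exact rle _ _ h
    · left; rw [Relation.reflTransGen_swap] at h; exact rle _ _ h
  · intro u
    induction u using WellFoundedGT.induction with
    | _ u ih =>
      intro hu
      by_cases huM : u ∈ M
      · obtain ⟨t, ht, h⟩ := ih (p u) (hp u huM).1 (hp u huM).2
        refine ⟨t, ht, ?_⟩
        simp only [mem_filter, mem_univ, true_and] at h ⊢
        exact Relation.ReflTransGen.head ⟨huM, rfl⟩ h
      · exact ⟨u, mem_sdiff.2 ⟨hu, huM⟩, by simp; exact Relation.ReflTransGen.refl⟩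

theorem chainCover (U M : Finset α) (hM : M ⊆ U) (p : α → α) (hinj : ∀ x ∈ M, ∀ y ∈ M, p x = p y → x = y)
    (hp : ∀ x ∈ M, x < p x ∧ p x ∈ U) :
    ∃ F : Finset (α → ℕ), F.card ≤ U.card - M.card ∧ (∀ f ∈ F, Monotone f) ∧
      ∀ u ∈ U, ∃ f ∈ F, ∀ x, ¬ x ≤ u → f u < f x := by
  obtain ⟨κ, h1, h2⟩ := chains U M hM p hinj hp
  refine ⟨(U \ M).image (fun t z => ((κ t).filter (fun u => ¬ z ≤ u)).card), ?_, ?_, ?_⟩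
  · exact card_image_le.trans (by rw [card_sdiff_of_subset hM])
  · intro f hf
    obtain ⟨t, _, rfl⟩ := mem_image.1 hf
    intro x y hxy
    apply card_le_card
    intro z hz
    rw [mem_filter] at hz ⊢
    exact ⟨hz.1, fun h => hz.2 (hxy.trans h)⟩
  · intro u hu
    obtain ⟨t, ht, hut⟩ := h2 u hu
    refine ⟨_, mem_image_of_mem _ ht, ?_⟩
    intro x hx
    apply card_lt_card
    rw [Finset.ssubset_iff_of_subset]
    · exact ⟨u, by simp [hut, hx], by simp⟩
    · intro z hz
      rw [mem_filter] at hz ⊢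
      refine ⟨hz.1, fun h => ?_⟩
      rcases h1 t ht z hz.1 u hut with h' | h'
      · exact hx (h.trans h')
      · exact hz.2 h'

theorem chainCover' (U M : Finset α) (hM : M ⊆ U) (p : α → α) (hinj : ∀ x ∈ M, ∀ y ∈ M, p x = p y → x = y)
    (hp : ∀ x ∈ M, x < p x ∧ p x ∈ U) :
    ∃ F : Finset (α → ℕ), F.card ≤ U.card - M.card ∧ (∀ f ∈ F, Monotone f) ∧
      ∀ u ∈ U, ∃ f ∈ F, ∀ y, ¬ u ≤ y → f y < f u := by
  obtain ⟨κ, h1, h2⟩ := chains U M hM p hinj hp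
  refine ⟨(U \ M).image (fun t z => ((κ t).filter (fun u => u ≤ z)).card), ?_, ?_, ?_⟩
  · exact card_image_le.trans (by rw [card_sdiff_of_subset hM])
  · intro f hf
    obtain ⟨t, _, rfl⟩ := mem_image.1 hf
    intro x y hxy
    apply card_le_card
    intro z hz
    rw [mem_filter] at hz ⊢
    exact ⟨hz.1, hz.2.trans hxy⟩
  · intro u hu
    obtain ⟨t, ht, hut⟩ := h2 u hu
    refine ⟨_, mem_image_of_mem _ ht, ?_⟩
    intro y hy
    apply card_lt_card
    rw [Finset.ssubset_iff_of_subset]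
    · exact ⟨u, by simp [hut], by simp [hy]⟩
    · intro z hz
      rw [mem_filter] at hz ⊢
      refine ⟨hz.1, ?_⟩
      rcases h1 t ht z hz.1 u hut with h' | h'
      · exact h'
      · exact absurd (h'.trans hz.2) hy

end pos2

set_option linter.unusedSectionVars false
section pos3
open Finset Classical
variable {α : Type u} [PartialOrder α] [Fintype α]

theorem konig (A B : Finset α) (E : α → α → Prop) :
    ∃ M : Finset α, ∃ p : α → α, ∃ Ac Bc : Finset α, M ⊆ A ∧ (∀ x ∈ M, p x ∈ B ∧ E x (p x)) ∧
      (∀ x ∈ M, ∀ y ∈ M, p x = p y → x = y) ∧ Ac ⊆ A ∧ Bc ⊆ B ∧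
      (∀ a ∈ A, ∀ b ∈ B, E a b → a ∈ Ac ∨ b ∈ Bc) ∧ Ac.card + Bc.card ≤ M.card := by
  let Nb : Finset α → Finset α := fun X => B.filter (fun b => ∃ a ∈ X, E a b)
  have NbB : ∀ X, (Nb X).card ≤ B.card := fun X => card_le_card (filter_subset _ _)
  obtain ⟨X, hX, hmax⟩ := Finset.exists_max_image A.powerset (fun X => X.card + B.card - (Nb X).card)
    ⟨∅, by simp⟩
  rw [mem_powerset] at hX
  have h0 : (Nb X).card ≤ X.card := by
    have h1 := hmax ∅ (by simp)
    have h2 : (Nb ∅).card = 0 := by simp [Nb]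
    rw [h2] at h1
    have := NbB X
    simp at h1
    omega
  obtain ⟨δ, hδ⟩ := Nat.exists_eq_add_of_le h0
  have hdef : ∀ Y ⊆ A, Y.card ≤ (Nb Y).card + δ := by
    intro Y hY
    have h1 := hmax Y (mem_powerset.2 hY)
    have := NbB X
    have := NbB Y
    have h1' : Y.card + B.card - (Nb Y).card ≤ X.card + B.card - (Nb X).card := h1
    omega
  let t : {a // a ∈ A} → Finset (α ⊕ Fin δ) := fun a => (B.filter (fun b => E a b)).disjSum univ
  have hall : ∀ Y : Finset {a // a ∈ A}, Y.card ≤ (Y.biUnion t).card := by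
    intro Y
    rcases Y.eq_empty_or_nonempty with rfl | ⟨y, hy⟩
    · simp
    have h1 := hdef (Y.map (Function.Embedding.subtype _)) (by
      intro a ha
      obtain ⟨b, hb, rfl⟩ := mem_map.1 ha
      exact b.2)
    rw [card_map] at h1
    have h2 : (Nb (Y.map (Function.Embedding.subtype _))).disjSum (univ : Finset (Fin δ)) ⊆ Y.biUnion t := by
      intro z hz
      rcases z with b | z
      · rw [inl_mem_disjSum] at hz
        simp only [Nb, mem_filter] at hz
        obtain ⟨hb, a, ha, hab⟩ := hz
        obtain ⟨a', ha', rfl⟩ := mem_map.1 ha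
        refine mem_biUnion.2 ⟨a', ha', ?_⟩
        simp only [t, inl_mem_disjSum, mem_filter]
        exact ⟨hb, hab⟩
      · refine mem_biUnion.2 ⟨y, hy, ?_⟩
        simp [t]
    have h3 := card_le_card h2
    rw [card_disjSum, card_univ, Fintype.card_fin] at h3
    omega
  obtain ⟨f, finj, hf⟩ := (Finset.all_card_le_biUnion_card_iff_exists_injective t).1 hall
  let M : Finset α := A.filter (fun a => ∃ ha : a ∈ A, (f ⟨a, ha⟩).isLeft)
  let p : α → α := fun a => if ha : a ∈ A then (match f ⟨a, ha⟩ with | Sum.inl b => b | Sum.inr _ => a) else a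
  have hMp : ∀ x ∈ M, ∃ ha : x ∈ A, f ⟨x, ha⟩ = Sum.inl (p x) := by
    intro x hx
    rw [mem_filter] at hx
    obtain ⟨_, ha, hl⟩ := hx
    refine ⟨ha, ?_⟩
    rcases hfx : f ⟨x, ha⟩ with b | z
    · simp [p, ha, hfx]
    · rw [hfx] at hl; simp at hl
  refine ⟨M, p, A \ X, Nb X, filter_subset _ _, ?_, ?_, sdiff_subset, filter_subset _ _, ?_, ?_⟩
  · intro x hx
    obtain ⟨ha, h1⟩ := hMp x hx
    have := hf ⟨x, ha⟩
    rw [h1] at this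
    simpa [t] using this
  · intro x hx y hy hxy
    obtain ⟨ha, h1⟩ := hMp x hx
    obtain ⟨hb, h2⟩ := hMp y hy
    have := finj (h1.trans ((congrArg Sum.inl hxy).trans h2.symm))
    exact congrArg Subtype.val this
  · intro a ha b hb hab
    by_cases haX : a ∈ X
    · right; exact mem_filter.2 ⟨hb, a, haX, hab⟩
    · left; exact mem_sdiff.2 ⟨ha, haX⟩
  · rw [card_sdiff_of_subset hX]
    have h1 : (A \ M).card ≤ δ := by
      have hr : ∀ a : {a // a ∈ A \ M}, ∃ z : Fin δ, f ⟨a.1, (mem_sdiff.1 a.2).1⟩ = Sum.inr z := by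
        rintro ⟨a, ha⟩
        rw [mem_sdiff] at ha
        rcases hfx : f ⟨a, ha.1⟩ with b | z
        · exfalso; apply ha.2
          exact mem_filter.2 ⟨ha.1, ha.1, by simp [hfx]⟩
        · exact ⟨z, rfl⟩
      choose z hz using hr
      have zinj : Function.Injective z := by
        intro a b hab
        have := finj ((hz a).trans ((congrArg Sum.inr hab).trans (hz b).symm))
        have h5 : (a:α) = b := congrArg (fun z : {a // a ∈ A} => (z:α)) this
        exact Subtype.ext h5
      have := Fintype.card_le_of_injective z zinj
      rw [Fintype.card_coe, Fintype.card_fin] at this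
      exact this
    have := sdiff_ge A M
    have := card_le_card hX
    omega

theorem dilworth (U : Finset α) :
    ∃ M : Finset α, ∃ p : α → α, ∃ B : Finset α, M ⊆ U ∧ (∀ x ∈ M, x < p x ∧ p x ∈ U) ∧
      (∀ x ∈ M, ∀ y ∈ M, p x = p y → x = y) ∧ B ⊆ U ∧ (∀ x ∈ B, ∀ y ∈ B, x ≤ y → x = y) ∧
      U.card ≤ M.card + B.card := by
  obtain ⟨M, p, Ac, Bc, h1, h2, h3, h4, h5, h6, h7⟩ := konig U U (fun x y => x < y)
  refine ⟨M, p, U \ (Ac ∪ Bc), h1, fun x hx => (h2 x hx).symm, h3, sdiff_subset, ?_, ?_⟩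
  · intro x hx y hy hxy
    rw [mem_sdiff, mem_union, not_or] at hx hy
    by_contra hne
    have := h6 x hx.1 y hy.1 (lt_of_le_of_ne hxy hne)
    tauto
  · have := sdiff_ge U (Ac ∪ Bc)
    have := card_union_le Ac Bc
    omega

/-- chain covers together with the two special elements -/
theorem stepOne {D A U : Finset α} (h : Tri D A U) (MU MD : Finset α) (pU pD : α → α)
    (hMU : MU ⊆ U) (hpU : ∀ x ∈ MU, x < pU x ∧ pU x ∈ U) (iU : ∀ x ∈ MU, ∀ y ∈ MU, pU x = pU y → x = y)
    (hMD : MD ⊆ D) (hpD : ∀ x ∈ MD, x < pD x ∧ pD x ∈ D) (iD : ∀ x ∈ MD, ∀ y ∈ MD, pD x = pD y → x = y)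
    (hbig : 2 * MU.card + 2 ≤ U.card) :
    Dm (D ∪ A ∪ U) (D.card + U.card - (MU.card + MD.card)) := by
  have hc : (MU ∪ MU.image pU).card ≤ 2 * MU.card := by
    have := card_union_le MU (MU.image pU)
    have : (MU.image pU).card ≤ MU.card := card_image_le
    omega
  obtain ⟨P, hP, hPc⟩ := exists_subset_card_eq (show 2 ≤ (U \ (MU ∪ MU.image pU)).card by
    have := sdiff_ge U (MU ∪ MU.image pU); omega)
  obtain ⟨u1, u2, hne, rfl⟩ := card_eq_two.1 hPc
  have m1 := hP (show u1 ∈ ({u1, u2} : Finset α) by simp)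
  have m2 := hP (show u2 ∈ ({u1, u2} : Finset α) by simp)
  simp only [mem_sdiff, mem_union, mem_image, not_or, not_exists, not_and] at m1 m2
  have hU' : (U \ {u1, u2}).card = U.card - 2 := by
    rw [card_sdiff_of_subset, hPc]
    intro x hx
    rw [mem_insert, mem_singleton] at hx
    rcases hx with rfl | rfl
    · exact m1.1
    · exact m2.1
  obtain ⟨F, f1, f2, f3⟩ := chainCover (U \ {u1, u2}) MU (by
    intro x hx
    simp only [mem_sdiff, mem_insert, mem_singleton, not_or]
    refine ⟨hMU hx, ?_, ?_⟩
    · rintro rfl; exact m1.2.1 hx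
    · rintro rfl; exact m2.2.1 hx) pU iU (by
    intro x hx
    simp only [mem_sdiff, mem_insert, mem_singleton, not_or]
    exact ⟨(hpU x hx).1, (hpU x hx).2, m1.2.2 x hx, m2.2.2 x hx⟩)
  obtain ⟨G, g1, g2, g3⟩ := chainCover' D MD hMD pD iD hpD
  have := starCover h (u1 := u1) (u2 := u2) m1.1 m2.1 (k := F.card + G.card) ⟨F ∪ G, card_union_le _ _, by
    intro f hf
    rcases mem_union.1 hf with hf | hf
    · exact (f2 f hf).monotoneOn _
    · exact (g2 f hf).monotoneOn _, by
    intro x hx y hy hxy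
    obtain ⟨hxy, hd | ⟨hyU, hy1, hy2⟩⟩ := hxy
    · obtain ⟨f, hf, h⟩ := g3 x hd
      exact ⟨f, mem_union_right _ hf, h y hxy.1⟩
    · obtain ⟨f, hf, h⟩ := f3 y (by simp [hyU, hy1, hy2])
      exact ⟨f, mem_union_left _ hf, h x hxy.1⟩⟩
  refine Cov.mono this (Subset.refl _) (fun _ _ _ _ h => h) ?_
  rw [hU'] at f1
  have := card_le_card hMU
  have := card_le_card hMD
  omega

theorem plainStars {D A U : Finset α} (h : Tri D A U) (hbig : 2 ≤ U.card) :
    Dm (D ∪ A ∪ U) (D.card + U.card) := by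
  have := stepOne h ∅ ∅ id id (by simp) (by simp) (by simp) (by simp) (by simp) (by simp) (by simpa using hbig)
  simpa using this

theorem pairRemoval (A : Finset α) (m : ℕ) : ∀ (D0 U0 : Finset α), Tri D0 A U0 →
    (∀ x ∈ D0, ∀ y ∈ D0, x ≤ y → x = y) → (∀ x ∈ U0, ∀ y ∈ U0, x ≤ y → x = y) →
    ∃ s ≤ m, ∃ D1 ⊆ D0, ∃ U1 ⊆ U0, D1.card + s = D0.card ∧ U1.card + s = U0.card ∧
      (s = m ∨ ∀ d ∈ D1, ∀ u ∈ U1, d ≤ u) ∧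
      ∀ k, 1 ≤ k → Dm (D1 ∪ A ∪ U1) k → Dm (D0 ∪ A ∪ U0) (k + s) := by
  induction m with
  | zero =>
    intro D0 U0 _ _ _
    exact ⟨0, le_rfl, D0, Subset.refl _, U0, Subset.refl _, rfl, rfl, Or.inl rfl, fun k _ h => h⟩
  | succ m ih =>
    intro D0 U0 h hD hU
    by_cases hcase : ∀ d ∈ D0, ∀ u ∈ U0, d ≤ u
    · exact ⟨0, by omega, D0, Subset.refl _, U0, Subset.refl _, rfl, rfl, Or.inr hcase, fun k _ h => h⟩
    · push Not at hcase
      obtain ⟨d, hd, u, hu, hdu⟩ := hcase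
      obtain ⟨s, hs, D1, hD1, U1, hU1, c1, c2, hor, hDm⟩ := ih (D0.erase d) (U0.erase u)
        (h.sub (erase_subset _ _) (Subset.refl _) (erase_subset _ _))
        (fun x hx y hy => hD x (mem_of_mem_erase hx) y (mem_of_mem_erase hy))
        (fun x hx y hy => hU x (mem_of_mem_erase hx) y (mem_of_mem_erase hy))
      have e1 := card_erase_add_one hd
      have e2 := card_erase_add_one hu
      refine ⟨s + 1, by omega, D1, hD1.trans (erase_subset _ _), U1, hU1.trans (erase_subset _ _),
        by omega, by omega, ?_, ?_⟩
      · rcases hor with h' | h'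
        · left; omega
        · right; exact h'
      · intro k hk hk'
        have h5 := hDm k hk hk'
        rw [← Nat.add_assoc]
        refine Dm.pair (d := d) (u := u) (Cov.mono h5 ?_ (fun _ _ _ _ h => h) le_rfl) (by omega) ?_ ?_
          ⟨hdu, h.nud u hu d hd⟩
        · intro z hz
          simp only [mem_sdiff, mem_union, mem_insert, mem_singleton, mem_erase] at hz ⊢
          tauto
        · intro z hz hzd
          rw [mem_union, mem_union] at hz
          rcases hz with (hz | hz) | hz
          · exact hD z hz d hd hzd
          · exact absurd hzd (h.nad z hz d hd)
          · exact absurd hzd (h.nud z hz d hd)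
        · intro z hz hzd
          rw [mem_union, mem_union] at hz
          rcases hz with (hz | hz) | hz
          · exact absurd hzd (h.nud u hu z hz)
          · exact absurd hzd (h.nua u hu z hz)
          · exact (hU u hu z hz hzd).symm
end pos3

set_option linter.unusedSectionVars false
section pos4
open Finset Classical
variable {α : Type u} [PartialOrder α] [Fintype α]

theorem tripleOne {D A U : Finset α} (h : Tri D A U) 
    (hD : ∀ x ∈ D, ∀ y ∈ D, x ≤ y → x = y) (hU : ∀ x ∈ U, ∀ y ∈ U, x ≤ y → x = y)
    (hDU : ∀ x ∈ D, ∀ y ∈ U, x ≤ y) {d u u' : α} (hd : d ∈ D) (hu : u ∈ U) (hu' : u' ∈ U) (hne : u ≠ u') :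
    Cov (D ∪ A ∪ U) (fun x y => Incomp x y ∧ (x = d ∨ y = u ∨ y = u')) 2 := by
  let g1 : α → ℕ := fun z => if z ∈ D then (if z = d then 2 else 0) else
    if z ∈ A then (if ¬ d ≤ z ∧ (z ≤ u ∨ ¬ z ≤ u') then 1 else
      if ¬ z ≤ u ∧ (d ≤ z ∨ z ≤ u') then 5 else 3) else (if z = u then 4 else 6)
  let g2 : α → ℕ := fun z => if z ∈ D then (if z = d then 2 else 0) else
    if z ∈ A then (if z ≤ u' then (if d ≤ z then 3 else 1) else (if z ≤ u then 5 else 7)) else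
      (if z = u' then 4 else if z = u then 6 else 8)
  have g1D : ∀ z ∈ D, g1 z = if z = d then 2 else 0 := by intro z hz; simp [g1, hz]
  have g2D : ∀ z ∈ D, g2 z = if z = d then 2 else 0 := by intro z hz; simp [g2, hz]
  have g1A : ∀ z ∈ A, g1 z = if ¬ d ≤ z ∧ (z ≤ u ∨ ¬ z ≤ u') then 1 else
      if ¬ z ≤ u ∧ (d ≤ z ∨ z ≤ u') then 5 else 3 := by
    intro z hz
    have hz' : z ∉ D := fun h' => h.dDA z h' hz
    simp only [g1, if_neg hz', if_pos hz]
  have g2A : ∀ z ∈ A, g2 z = if z ≤ u' then (if d ≤ z then 3 else 1) else (if z ≤ u then 5 else 7) := by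
    intro z hz
    have hz' : z ∉ D := fun h' => h.dDA z h' hz
    simp only [g2, if_neg hz', if_pos hz]
  have g1U : ∀ z ∈ U, g1 z = if z = u then 4 else 6 := by
    intro z hz
    have hz' : z ∉ D := fun h' => h.dDU z h' hz
    have hz2 : z ∉ A := fun h' => h.dAU z h' hz
    simp only [g1, if_neg hz', if_neg hz2]
  have g2U : ∀ z ∈ U, g2 z = if z = u' then 4 else if z = u then 6 else 8 := by
    intro z hz
    have hz' : z ∉ D := fun h' => h.dDU z h' hz
    have hz2 : z ∉ A := fun h' => h.dAU z h' hz
    simp only [g2, if_neg hz', if_neg hz2]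
  refine ⟨{g1, g2}, card_le_two, ?_, ?_⟩
  · intro f hf x hx y hy hxy
    rw [mem_insert, mem_singleton] at hf
    rw [mem_coe, mem_union, mem_union] at hx hy
    rcases hx with (hx | hx) | hx <;> rcases hy with (hy | hy) | hy
    · rw [hD x hx y hy hxy]
    · have hdd : x = d → d ≤ y := by rintro rfl; exact hxy
      rcases hf with rfl | rfl
      · rw [g1D x hx, g1A y hy]; split_ifs <;> first | omega | tauto
      · rw [g2D x hx, g2A y hy]; split_ifs <;> first | omega | tauto
    · rcases hf with rfl | rfl
      · rw [g1D x hx, g1U y hy]; split_ifs <;> omega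
      · rw [g2D x hx, g2U y hy]; split_ifs <;> omega
    · exact absurd hxy (h.nad x hx y hy)
    · rw [h.anti x hx y hy hxy]
    · have e1 : y = u → x ≤ u := by rintro rfl; exact hxy
      have e2 : y = u' → x ≤ u' := by rintro rfl; exact hxy
      rcases hf with rfl | rfl
      · rw [g1A x hx, g1U y hy]; split_ifs <;> first | omega | tauto
      · rw [g2A x hx, g2U y hy]; split_ifs <;> first | omega | tauto
    · exact absurd hxy (h.nud x hx y hy)
    · exact absurd hxy (h.nua x hx y hy)
    · rw [hU x hx y hy hxy]
  · intro x hx y hy hxy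
    suffices g1 y < g1 x ∨ g2 y < g2 x by
      rcases this with h' | h'
      · exact ⟨g1, by simp, h'⟩
      · exact ⟨g2, by simp, h'⟩
    obtain ⟨hxy, rfl | rfl | rfl⟩ := hxy
    · rw [mem_union, mem_union] at hy
      rcases hy with (hy | hy) | hy
      · left
        have : y ≠ x := by rintro rfl; exact hxy.1 le_rfl
        rw [g1D x hd, g1D y hy]; simp [this]
      · have := hxy.1
        rw [g1D x hd, g2D x hd, g1A y hy, g2A y hy]; simp only [if_true, this]
        by_cases a1 : y ≤ u <;> by_cases a2 : y ≤ u' <;> simp [a1, a2]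
      · exact absurd (hDU x hd y hy) hxy.1
    · rw [mem_union, mem_union] at hx
      rcases hx with (hx | hx) | hx
      · exact absurd (hDU x hx y hu) hxy.1
      · have := hxy.1
        rw [g1A x hx, g2A x hx, g1U y hu, g2U y hu]; simp only [if_true, this, hne]
        by_cases a1 : d ≤ x <;> by_cases a2 : x ≤ u' <;> simp [a1, a2]
      · left
        have : x ≠ y := by rintro rfl; exact hxy.1 le_rfl
        rw [g1U y hu, g1U x hx]; simp [this]
    · right
      rw [mem_union, mem_union] at hx
      rcases hx with (hx | hx) | hx
      · exact absurd (hDU x hx y hu') hxy.1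
      · have := hxy.1
        rw [g2A x hx, g2U y hu', if_neg this, if_pos rfl]
        split_ifs <;> omega
      · have : x ≠ y := by rintro rfl; exact hxy.1 le_rfl
        rw [g2U y hu', g2U x hx, if_neg this, if_pos rfl]
        split_ifs <;> omega

theorem tripleMany {D A U : Finset α} (h : Tri D A U) 
    (hD : ∀ x ∈ D, ∀ y ∈ D, x ≤ y → x = y) (hU : ∀ x ∈ U, ∀ y ∈ U, x ≤ y → x = y)
    (hDU : ∀ x ∈ D, ∀ y ∈ U, x ≤ y) (t : ℕ) : ∀ D' U' : Finset α, D' ⊆ D → U' ⊆ U →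
    t ≤ D'.card → 2 * t ≤ U'.card →
    Cov (D ∪ A ∪ U) (fun x y => Incomp x y ∧ (x ∈ D' ∨ y ∈ U')) (D'.card + U'.card - t) := by
  induction t with
  | zero =>
    intro D' U' _ _ _ _
    obtain ⟨F, f1, f2, f3⟩ := chainCover U' ∅ (by simp) id (by simp) (by simp)
    obtain ⟨G, g1, g2, g3⟩ := chainCover' D' ∅ (by simp) id (by simp) (by simp)
    rw [card_empty] at f1 g1
    refine ⟨F ∪ G, (card_union_le _ _).trans (by omega), ?_, ?_⟩
    · intro f hf
      rcases mem_union.1 hf with hf | hf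
      · exact (f2 f hf).monotoneOn _
      · exact (g2 f hf).monotoneOn _
    · intro x hx y hy hxy
      obtain ⟨hxy, hd | hyU⟩ := hxy
      · obtain ⟨f, hf, h⟩ := g3 x hd
        exact ⟨f, mem_union_right _ hf, h y hxy.1⟩
      · obtain ⟨f, hf, h⟩ := f3 y hyU
        exact ⟨f, mem_union_left _ hf, h x hxy.1⟩
  | succ t ih =>
    intro D' U' hD' hU' h1 h2
    obtain ⟨d, hd⟩ := card_pos.1 (show 0 < D'.card by omega)
    obtain ⟨u, hu, u', hu', hne⟩ := one_lt_card.1 (show 1 < U'.card by omega)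
    have e1 := card_erase_add_one hd
    have e2 := card_erase_add_one hu
    have hu'' : u' ∈ U'.erase u := mem_erase.2 ⟨hne.symm, hu'⟩
    have e3 := card_erase_add_one hu''
    have := ih (D'.erase d) ((U'.erase u).erase u') ((erase_subset _ _).trans hD')
      ((erase_subset _ _).trans ((erase_subset _ _).trans hU')) (by omega) (by omega)
    refine (Cov.add this (tripleOne h hD hU hDU (hD' hd) (hU' hu) (hU' hu') hne)).mono (Subset.refl _) ?_ (by omega)
    intro x _ y _ hxy
    simp only [mem_erase]
    tauto

theorem tripleDm {D A U : Finset α} (h : Tri D A U) 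
    (hD : ∀ x ∈ D, ∀ y ∈ D, x ≤ y → x = y) (hU : ∀ x ∈ U, ∀ y ∈ U, x ≤ y → x = y)
    (hDU : ∀ x ∈ D, ∀ y ∈ U, x ≤ y) (t : ℕ) (h1 : t ≤ D.card) (h2 : 2 * t + 2 ≤ U.card) :
    Dm (D ∪ A ∪ U) (D.card + U.card - t) := by
  obtain ⟨u, hu, u', hu', hne⟩ := one_lt_card.1 (show 1 < U.card by omega)
  have e2 := card_erase_add_one hu
  have hu'' : u' ∈ U.erase u := mem_erase.2 ⟨hne.symm, hu'⟩
  have e3 := card_erase_add_one hu''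
  have := tripleMany h hD hU hDU t D ((U.erase u).erase u') (Subset.refl _)
      ((erase_subset _ _).trans (erase_subset _ _)) h1 (by omega)
  have := starCover h hu hu' (this.mono (Subset.refl _) (by
    intro x _ y _ hxy
    simp only [mem_erase]
    tauto) le_rfl)
  exact Cov.mono this (Subset.refl _) (fun _ _ _ _ h => h) (by omega)
end pos4

set_option linter.unusedSectionVars false
section pos5
open Finset Classical
variable {α : Type u} [PartialOrder α] [Fintype α]

theorem konigDm {A B : Finset α} (hA : ∀ x ∈ A, ∀ y ∈ A, x ≤ y → x = y) (hB : ∀ x ∈ B, ∀ y ∈ B, x ≤ y → x = y)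
    (hAB : ∀ x ∈ A, x ∉ B) (hba : ∀ b ∈ B, ∀ a ∈ A, ¬ b ≤ a) :
    ∃ M : Finset α, ∃ p : α → α, M ⊆ A ∧ (∀ x ∈ M, p x ∈ B ∧ Incomp x (p x)) ∧
      (∀ x ∈ M, ∀ y ∈ M, p x = p y → x = y) ∧ Dm (A ∪ B) (max M.card 1 + 1) := by
  obtain ⟨M, p, Ac, Bc, h1, h2, h3, h4, h5, h6, h7⟩ := konig A B Incomp
  refine ⟨M, p, h1, h2, h3, bipCover hA hB hAB hba (le_max_right _ _) ?_⟩
  obtain ⟨F, f1, f2, f3⟩ := chainCover Bc ∅ (by simp) id (by simp) (by simp)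
  obtain ⟨G, g1, g2, g3⟩ := chainCover' Ac ∅ (by simp) id (by simp) (by simp)
  rw [card_empty] at f1 g1
  refine ⟨F ∪ G, (card_union_le _ _).trans (le_trans ?_ (le_max_left _ _)), ?_, ?_⟩
  · omega
  · intro f hf
    rcases mem_union.1 hf with hf | hf
    · exact (f2 f hf).monotoneOn _
    · exact (g2 f hf).monotoneOn _
  · intro x hx y hy hxy
    obtain ⟨hxy, hxA, hyB⟩ := hxy
    rcases h6 x hxA y hyB hxy with hd | hyU
    · obtain ⟨f, hf, h⟩ := g3 x hd
      exact ⟨f, mem_union_right _ hf, h y hxy.1⟩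
    · obtain ⟨f, hf, h⟩ := f3 y hyU
      exact ⟨f, mem_union_left _ hf, h x hxy.1⟩

theorem saveDm {M : Finset α} {p : α → α} (hA : ∀ x ∈ M, ∀ y ∈ M, x ≤ y → x = y)
    (hB : ∀ x ∈ M.image p, ∀ y ∈ M.image p, x ≤ y → x = y)
    (hAB : ∀ x ∈ M, x ∉ M.image p) (hba : ∀ b ∈ M.image p, ∀ a ∈ M, ¬ b ≤ a) (s : ℕ)
    (hs : Save (fun i j : {x // x ∈ M} => Incomp (i : α) (p j)) s) :
    Dm (M ∪ M.image p) (max (M.card - s) 1 + 1) := by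
  obtain ⟨σ, V, w, hV, h1, h2⟩ := hs
  refine bipCover hA hB hAB hba (le_max_right _ _) ?_
  let T : {x // x ∈ M} → α → Prop := fun i z =>
    (∃ j, w i = (j, true) ∧ Incomp (j : α) (p (σ i)) ∧ ((i : α) ≤ z ∨ (j : α) ≤ z)) ∨
    (∃ j, w i = (j, false) ∧ Incomp (i : α) (p (σ j)) ∧ ¬ (z ≤ p (σ i) ∨ z ≤ p (σ j)))
  have Tm : ∀ i x y, x ≤ y → T i x → T i y := by
    rintro i x y hxy (⟨j, a, b, c⟩ | ⟨j, a, b, c⟩)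
    · refine Or.inl ⟨j, a, b, ?_⟩
      rcases c with c | c
      · exact Or.inl (c.trans hxy)
      · exact Or.inr (c.trans hxy)
    · refine Or.inr ⟨j, a, b, ?_⟩
      rintro (c' | c')
      · exact c (Or.inl (hxy.trans c'))
      · exact c (Or.inr (hxy.trans c'))
  let fn : {x // x ∈ M} → α → ℕ := fun i z =>
    (if z ≤ p (σ i) then 0 else 1) + (if (i : α) ≤ z then 1 else 0) + (if T i z then 1 else 0)
  have fnm : ∀ i, Monotone (fn i) := by
    intro i x y hxy
    have t1 : y ≤ p (σ i) → x ≤ p (σ i) := fun h => hxy.trans h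
    have t2 : (i : α) ≤ x → (i : α) ≤ y := fun h => h.trans hxy
    exact Nat.add_le_add (Nat.add_le_add (ite10 t1) (ite01 t2)) (ite01 (Tm i x y hxy))
  refine ⟨(univ \ V).image fn, ?_, ?_, ?_⟩
  · refine card_image_le.trans (le_trans ?_ (le_max_left _ _))
    rw [card_sdiff_of_subset (subset_univ V), card_univ, Fintype.card_coe, hV]
  · intro f hf
    obtain ⟨i, _, rfl⟩ := mem_image.1 hf
    exact (fnm i).monotoneOn _
  · intro x _ y _ hxy
    obtain ⟨hxy, hxM, hyM⟩ := hxy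
    obtain ⟨y', hy', rfl⟩ := mem_image.1 hyM
    obtain ⟨k, hk⟩ := σ.surjective ⟨y', hy'⟩
    have hky : p y' = p (σ k) := by rw [hk]
    rw [hky] at hxy ⊢
    obtain ⟨i, hi⟩ : ∃ i : {x // x ∈ M}, (i : α) = x := ⟨⟨x, hxM⟩, rfl⟩
    subst hi
    have mem : ∀ m, m ∉ V → fn m ∈ (univ \ V).image fn := fun m hm =>
      mem_image_of_mem _ (mem_sdiff.2 ⟨mem_univ _, hm⟩)
    by_cases hiV : i ∈ V
    · by_cases hkV : k ∈ V
      · obtain ⟨m, hm, m1, m2, m3⟩ := h2 i hiV k hkV hxy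
        refine ⟨fn m, mem m hm, ?_⟩
        have n1 := m1.1
        have n2 := m2.1
        have n3 := hxy.1
        have t1 : T m i := by
          rcases m3 with m3 | m3
          · exact Or.inl ⟨i, m3, m1, Or.inr le_rfl⟩
          · exact Or.inr ⟨k, m3, m2, by tauto⟩
        have t2 : ¬ T m (p (σ k)) := by
          rintro (⟨j, a, b, c⟩ | ⟨j, a, b, c⟩)
          · rcases m3 with m3 | m3
            · rw [m3] at a
              have : i = j := by simpa using a
              subst this
              tauto
            · rw [m3] at a; simp at a
          · rcases m3 with m3 | m3
            · rw [m3] at a; simp at a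
            · rw [m3] at a
              have : k = j := by simpa using a
              subst this
              exact c (Or.inr le_rfl)
        simp only [fn, if_pos t1, if_neg t2, if_neg n1, if_neg n2]
        split_ifs <;> omega
      · refine ⟨fn k, mem k hkV, ?_⟩
        have n1 := (h1 k hkV).1
        have n2 := hxy.1
        have t2 : ¬ T k (p (σ k)) := by
          rintro (⟨j, a, b, c⟩ | ⟨j, a, b, c⟩)
          · have := b.1; tauto
          · exact c (Or.inl le_rfl)
        simp only [fn, if_neg t2, if_neg n1, if_neg n2, le_refl, if_true]
        omega
    · refine ⟨fn i, mem i hiV, ?_⟩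
      have n1 := (h1 i hiV).1
      have n2 := hxy.1
      have t : T i (p (σ k)) → T i i := by
        rintro (⟨j, a, b, c⟩ | ⟨j, a, b, c⟩)
        · exact Or.inl ⟨j, a, b, Or.inl le_rfl⟩
        · refine Or.inr ⟨j, a, b, ?_⟩
          have := b.1; tauto
      have t' := ite01 t
      simp only [fn, if_neg n1, if_neg n2, le_refl, if_true]
      split_ifs at t' ⊢ <;> omega

theorem stdEx {M : Finset α} {p : α → α} (hA : ∀ x ∈ M, ∀ y ∈ M, x ≤ y → x = y)
    (hB : ∀ x ∈ M.image p, ∀ y ∈ M.image p, x ≤ y → x = y)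
    (hp : ∀ x ∈ M, Incomp x (p x)) (hinj : ∀ x ∈ M, ∀ y ∈ M, p x = p y → x = y)
    (hAB : ∀ x ∈ M, x ∉ M.image p) (hba : ∀ b ∈ M.image p, ∀ a ∈ M, ¬ b ≤ a)
    (T : Finset {x // x ∈ M}) (hT : ∀ i ∈ T, ∀ j ∈ T, i ≠ j → ¬ Incomp (i : α) (p j)) :
    ContainsStdExample α T.card := by
  let e := T.equivFin.symm
  have einj : ∀ i j, ((e i : {x // x ∈ M}) : α) = ((e j : {x // x ∈ M}) : α) → i = j := by
    intro i j h
    exact e.injective (Subtype.ext (Subtype.ext h))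
  have eM : ∀ i, ((e i : {x // x ∈ M}) : α) ∈ M := fun i => (e i).1.2
  have pM : ∀ i, p ((e i : {x // x ∈ M}) : α) ∈ M.image p := fun i => mem_image_of_mem _ (eM i)
  have pinj : ∀ i j, p ((e i : {x // x ∈ M}) : α) = p ((e j : {x // x ∈ M}) : α) → i = j := by
    intro i j h
    exact einj i j (hinj _ (eM i) _ (eM j) h)
  refine ⟨fun i => ((e i : {x // x ∈ M}) : α), fun i => p ((e i : {x // x ∈ M}) : α),
    fun i j h => einj i j h, fun i j h => pinj i j h, ?_, ?_, ?_, ?_, ?_⟩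
  · intro i j h
    apply hAB _ (eM i)
    have h' : ((e i : {x // x ∈ M}) : α) = p ((e j : {x // x ∈ M}) : α) := h
    rw [h']; exact pM j
  · intro i j
    constructor
    · rintro h rfl
      exact (hp _ (eM i)).1 h.le
    · intro hij
      have hne : (e i).1 ≠ (e j).1 := fun h => hij (e.injective (Subtype.ext h))
      have := hT _ (e i).2 _ (e j).2 hne
      have hb := hba _ (pM j) _ (eM i)
      have hle : ((e i : {x // x ∈ M}) : α) ≤ p ((e j : {x // x ∈ M}) : α) := by
        by_contra hn
        exact this ⟨hn, hb⟩
      exact lt_of_le_not_ge hle hb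
  · intro i j hij
    exact ⟨fun h => hij (einj _ _ (hA _ (eM i) _ (eM j) h)), fun h => hij (einj _ _ (hA _ (eM j) _ (eM i) h)).symm⟩
  · intro i j hij
    exact ⟨fun h => hij (pinj _ _ (hB _ (pM i) _ (pM j) h)), fun h => hij (pinj _ _ (hB _ (pM j) _ (pM i) h)).symm⟩
  · intro i j
    exact hba _ (pM j) _ (eM i)
end pos5

set_option linter.unusedSectionVars false
section pos6
open Finset Classical
variable {α : Type u} [PartialOrder α] [Fintype α]

theorem Dm.anti {A : Finset α} (hA : ∀ x ∈ A, ∀ y ∈ A, x ≤ y → x = y) : Dm A 2 := by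
  obtain ⟨κ, κinj, κm⟩ := exists_linext α
  obtain ⟨K, hK⟩ := exists_bound κ
  refine ⟨{κ, fun z => K - κ z}, card_le_two, ?_, ?_⟩
  · intro f _ x hx y hy hxy
    rw [hA x hx y hy hxy]
  · intro x hx y hy hxy
    have hne : κ x ≠ κ y := by
      intro h'; have := κinj h'; subst this; exact hxy.1 le_rfl
    have := hK x
    have := hK y
    by_cases h : κ y < κ x
    · exact ⟨κ, by simp, h⟩
    · refine ⟨fun z => K - κ z, by simp, ?_⟩
      show K - κ y < K - κ x
      omega

set_option maxHeartbeats 4000000 in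
theorem mainLemma {D A U : Finset α} (h : Tri D A U) (huniv : D ∪ A ∪ U = univ) (hDU : D.card ≤ U.card)
    (c n : ℕ) (hc : 0 < c) (hn : 34850 * c < n) (hA : n ≤ A.card + c) (hcard : Fintype.card α ≤ 2 * n + 1)
    (H : ∀ k, 1 ≤ k → Dm (univ : Finset α) k → n ≤ k + c) :
    ∃ d, n ≤ d + (28 * (6 * c + 5) ^ 2 + 7 * (6 * c + 5) + 1 + 5 * c + 3) ∧ ContainsStdExample α d := by
  have hE : D.card + A.card + U.card = Fintype.card α := by
    rw [← card_univ, ← huniv, card_union_of_disjoint, card_union_of_disjoint]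
    · exact disjoint_left.2 h.dDA
    · rw [disjoint_left]
      intro x hx
      rcases mem_union.1 hx with hx | hx
      · exact h.dDU x hx
      · exact h.dAU x hx
  have hE0 : n ≤ D.card + U.card + 2 + c := by
    have h1 := (Dm.anti h.anti).union (by omega) (D ∪ U)
    have h2 : A ∪ (D ∪ U) = univ := by rw [← huniv]; ext z; simp only [mem_union]; tauto
    rw [h2] at h1
    have := H _ (by omega) h1
    have := card_union_le D U
    omega
  have hE1 : n ≤ D.card + U.card + c := by
    have h1 := plainStars h (by omega)
    rw [huniv] at h1
    exact H _ (by omega) h1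
  obtain ⟨x, hx⟩ : ∃ x, D.card + U.card + c = n + x := ⟨D.card + U.card + c - n, by omega⟩
  have hx2 : x ≤ 2 * c + 1 := by omega
  -- step 1
  obtain ⟨MU, pU, BU, u1, u2, u3, u4, u5, u6⟩ := dilworth U
  obtain ⟨MD, pD, BD, d1, d2, d3, d4, d5, d6⟩ := dilworth D
  have hM : MU.card + MD.card ≤ x := by
    by_contra hcon
    obtain ⟨MU', s1, s2⟩ := exists_subset_card_eq (show min MU.card (x + 1) ≤ MU.card from min_le_left _ _)
    obtain ⟨MD', t1, t2⟩ := exists_subset_card_eq (show x + 1 - min MU.card (x + 1) ≤ MD.card by omega)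
    have h1 := stepOne h MU' MD' pU pD (s1.trans u1) (fun z hz => u2 z (s1 hz))
      (fun z hz y hy => u3 z (s1 hz) y (s1 hy)) (t1.trans d1) (fun z hz => d2 z (t1 hz))
      (fun z hz y hy => d3 z (t1 hz) y (t1 hy)) (by omega)
    rw [huniv] at h1
    have := H _ (by omega) h1
    omega
  obtain ⟨rU, hrU⟩ : ∃ r, BU.card + r = U.card := ⟨U.card - BU.card, by have := card_le_card u4; omega⟩
  obtain ⟨rD, hrD⟩ : ∃ r, BD.card + r = D.card := ⟨D.card - BD.card, by have := card_le_card d4; omega⟩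
  -- step 2
  have H0 : ∀ k, 1 ≤ k → Dm (BD ∪ A ∪ BU) k → n ≤ k + (rU + rD) + c := by
    intro k hk hD
    have h1 := Dm.union hD hk ((D \ BD) ∪ (U \ BU))
    have h2 : BD ∪ A ∪ BU ∪ ((D \ BD) ∪ (U \ BU)) = univ := by
      rw [← huniv]; ext z
      have := @u4 z
      have := @d4 z
      simp only [mem_union, mem_sdiff]; tauto
    rw [h2] at h1
    have := H _ (by omega) h1
    have := card_union_le (D \ BD) (U \ BU)
    rw [card_sdiff_of_subset u4, card_sdiff_of_subset d4] at this
    omega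
  -- step 3
  have tri0 : Tri BD A BU := h.sub d4 (Subset.refl _) u4
  obtain ⟨s, hs, D1, hD1, U1, hU1, c1, c2, hor, hDm⟩ := pairRemoval A (x + 1) BD BU tri0 d5 u5
  have tri1 : Tri D1 A U1 := tri0.sub hD1 (Subset.refl _) hU1
  have H1 : ∀ k, 1 ≤ k → Dm (D1 ∪ A ∪ U1) k → n ≤ k + s + (rU + rD) + c := by
    intro k hk hD
    exact H0 _ (by omega) (hDm k hk hD)
  have hsx : s ≤ x := by
    have h1 := plainStars tri1 (by omega)
    have := H1 _ (by omega) h1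
    omega
  have hDU1 : ∀ d ∈ D1, ∀ u ∈ U1, d ≤ u := by
    rcases hor with h' | h'
    · omega
    · exact h'
  have antiU1 : ∀ x ∈ U1, ∀ y ∈ U1, x ≤ y → x = y := fun a ha b hb => u5 a (hU1 ha) b (hU1 hb)
  have antiD1 : ∀ x ∈ D1, ∀ y ∈ D1, x ≤ y → x = y := fun a ha b hb => d5 a (hD1 ha) b (hD1 hb)
  -- step 4
  have hq : D1.card + s ≤ x := by
    have h1 := tripleDm tri1 antiD1 antiU1 hDU1 (min D1.card (x + 1)) (min_le_left _ _) (by omega)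
    have := H1 _ (by omega) h1
    omega
  -- step 5
  have H2 : ∀ k, 1 ≤ k → Dm (A ∪ U1) k → n ≤ k + D1.card + s + (rU + rD) + c := by
    intro k hk hD
    have h1 := Dm.union hD hk D1
    have h2 : A ∪ U1 ∪ D1 = D1 ∪ A ∪ U1 := by ext z; simp only [mem_union]; tauto
    rw [h2] at h1
    exact H1 _ (by omega) h1
  obtain ⟨M, p, m1, m2, m3, m4⟩ := konigDm h.anti antiU1 tri1.dAU tri1.nua
  have hN : n ≤ M.card + 5 * c + 3 := by
    have := H2 _ (by omega) m4
    omega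
  -- step 6
  have pU1 : M.image p ⊆ U1 := by
    intro z hz
    obtain ⟨y, hy, rfl⟩ := mem_image.1 hz
    exact (m2 y hy).1
  have e1 : ∀ x ∈ M, ∀ y ∈ M, x ≤ y → x = y := fun a ha b hb => h.anti a (m1 ha) b (m1 hb)
  have e2 : ∀ x ∈ M.image p, ∀ y ∈ M.image p, x ≤ y → x = y := fun a ha b hb => antiU1 a (pU1 ha) b (pU1 hb)
  have e3 : ∀ x ∈ M, x ∉ M.image p := fun a ha hb => tri1.dAU a (m1 ha) (pU1 hb)
  have e4 : ∀ b ∈ M.image p, ∀ a ∈ M, ¬ b ≤ a := fun b hb a ha => tri1.nua b (pU1 hb) a (m1 ha)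
  have ci : (M.image p).card = M.card := card_image_of_injOn (fun a ha b hb hab => m3 a ha b hb hab)
  have hSave : ∀ s', Save (fun i j : {x // x ∈ M} => Incomp (i : α) (p j)) s' → s' ≤ 6 * c + 5 := by
    intro s' hs'
    have h1 := Dm.union (saveDm e1 e2 e3 e4 s' hs') (by omega) ((A \ M) ∪ (U1 \ M.image p))
    have h2 : M ∪ M.image p ∪ ((A \ M) ∪ (U1 \ M.image p)) = A ∪ U1 := by
      ext z
      have := @m1 z
      have := @pU1 z
      simp only [mem_union, mem_sdiff]; tauto
    rw [h2] at h1
    have h3 := H2 _ (by omega) h1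
    have h4 := card_union_le (A \ M) (U1 \ M.image p)
    rw [card_sdiff_of_subset m1, card_sdiff_of_subset pU1, ci] at h4
    have h5 := card_le_card m1
    have h6 := card_le_card pU1
    rw [ci] at h6
    omega
  obtain ⟨T, t1, t2⟩ := indep _ (fun i : {x // x ∈ M} => (m2 i i.2).2) _ hSave
  rw [Fintype.card_coe] at t2
  refine ⟨T.card, by omega, stdEx e1 e2 (fun a ha => (m2 a ha).2) m3 e3 e4 T t1⟩
end pos6

set_option linter.unusedSectionVars false
section pos7
open Finset Classical
variable {α : Type u} [PartialOrder α] [Fintype α]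

theorem Dm.ofDual {k : ℕ} (h : Dm (univ : Finset αᵒᵈ) k) : Dm (univ : Finset α) k := by
  obtain ⟨F, h1, h2, h3⟩ := h
  let tr : (αᵒᵈ → ℕ) → (α → ℕ) := fun f x => (exists_bound f).choose - f (OrderDual.toDual x)
  refine ⟨F.image tr, card_image_le.trans h1, ?_, ?_⟩
  · intro g hg
    obtain ⟨f, hf, rfl⟩ := mem_image.1 hg
    intro x _ y _ hxy
    have : f (OrderDual.toDual y) ≤ f (OrderDual.toDual x) :=
      h2 f hf (by simp) (by simp) (OrderDual.toDual_le_toDual.2 hxy)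
    simp only [tr]; omega
  · intro x _ y _ hxy
    obtain ⟨f, hf, hlt⟩ := h3 (OrderDual.toDual y) (mem_univ _) (OrderDual.toDual x) (mem_univ _)
      ⟨fun h => hxy.1 (OrderDual.toDual_le_toDual.1 h), fun h => hxy.2 (OrderDual.toDual_le_toDual.1 h)⟩
    refine ⟨tr f, mem_image_of_mem _ hf, ?_⟩
    have hb := (exists_bound f).choose_spec
    have := hb (OrderDual.toDual x)
    have := hb (OrderDual.toDual y)
    simp only [tr]; omega

theorem std_ofDual {d : ℕ} (h : ContainsStdExample αᵒᵈ d) : ContainsStdExample α d := by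
  obtain ⟨a, b, h1, h2, h3, h4, h5, h6, h7⟩ := h
  refine ⟨fun i => OrderDual.ofDual (b i), fun i => OrderDual.ofDual (a i), h2, h1,
    fun i j h => h3 j i h.symm, ?_, ?_, ?_, ?_⟩
  · intro i j
    exact (h4 j i).trans ⟨Ne.symm, Ne.symm⟩
  · intro i j hij
    exact ⟨(h6 i j hij).2, (h6 i j hij).1⟩
  · intro i j hij
    exact ⟨(h5 i j hij).2, (h5 i j hij).1⟩
  · intro i j
    exact h7 j i

theorem coreThm (c : ℕ) (hc : 0 < c) (n : ℕ) (hn : 10 * (3485 * c ^ 2) < n)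
    (hcard : Fintype.card α ≤ 2 * n + 1) (hdim : n - c ≤ dimP α) :
    ∃ d : ℕ, n - 3485 * c ^ 2 ≤ d ∧ ContainsStdExample α d := by
  have hcc : c ≤ c ^ 2 := by nlinarith
  have H : ∀ k, 1 ≤ k → Dm (univ : Finset α) k → n ≤ k + c := by
    intro k hk h
    have := dim_le_of_Dm k hk h
    omega
  obtain ⟨M, p, A, a1, a2, a3, a4, a5, a6⟩ := dilworth (univ : Finset α)
  have hDA : Dm (univ : Finset α) A.card := by
    obtain ⟨F, f1, f2, f3⟩ := chainCover univ M a1 p a3 a2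
    refine ⟨F, by omega, fun f hf => (f2 f hf).monotoneOn _, ?_⟩
    intro x hx y hy hxy
    obtain ⟨f, hf, h⟩ := f3 y hy
    exact ⟨f, hf, h x hxy.1⟩
  have hA : n ≤ A.card + c := by
    by_cases h0 : 1 ≤ A.card
    · exact H _ h0 hDA
    · have := H 1 le_rfl (Cov.mono hDA (Subset.refl _) (fun _ _ _ _ h => h) (by omega))
      omega
  have fin : ∀ d, n ≤ d + (28 * (6 * c + 5) ^ 2 + 7 * (6 * c + 5) + 1 + 5 * c + 3) → n - 3485 * c ^ 2 ≤ d := by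
    intro d hd
    have : 28 * (6 * c + 5) ^ 2 + 7 * (6 * c + 5) + 1 + 5 * c + 3 ≤ 3485 * c ^ 2 := by nlinarith
    omega
  let D : Finset α := univ.filter (fun x => x ∉ A ∧ ∃ a ∈ A, x < a)
  let U : Finset α := univ.filter (fun x => x ∉ A ∧ ¬ ∃ a ∈ A, x < a)
  have mD : ∀ x, x ∈ D ↔ (x ∉ A ∧ ∃ a ∈ A, x < a) := by intro x; simp [D]
  have mU : ∀ x, x ∈ U ↔ (x ∉ A ∧ ¬ ∃ a ∈ A, x < a) := by intro x; simp [U]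
  have tri : Tri D A U := by
    refine ⟨fun x hx => ((mD x).1 hx).1, fun x hx hx' => ((mU x).1 hx').2 ((mD x).1 hx).2,
      fun x hx hx' => ((mU x).1 hx').1 hx, a5, ?_, ?_, ?_⟩
    · intro a ha d hd hle
      obtain ⟨hdA, b, hb, hlt⟩ := (mD d).1 hd
      have := a5 a ha b hb (hle.trans hlt.le)
      subst this
      exact absurd hlt (not_lt_of_ge hle)
    · intro u hu a ha hle
      obtain ⟨h1, h2⟩ := (mU u).1 hu
      exact h2 ⟨a, ha, lt_of_le_of_ne hle (by rintro rfl; exact h1 ha)⟩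
    · intro u hu d hd hle
      obtain ⟨h1, h2⟩ := (mU u).1 hu
      obtain ⟨hdA, b, hb, hlt⟩ := (mD d).1 hd
      exact h2 ⟨b, hb, lt_of_le_of_lt hle hlt⟩
  have huniv : D ∪ A ∪ U = univ := by
    ext x
    simp only [mem_union, mD, mU, mem_univ, iff_true]
    by_cases q1 : x ∈ A
    · exact Or.inl (Or.inr q1)
    · by_cases q2 : ∃ a ∈ A, x < a
      · exact Or.inl (Or.inl ⟨q1, q2⟩)
      · exact Or.inr ⟨q1, q2⟩
  by_cases hDU : D.card ≤ U.card
  · obtain ⟨d, h1, h2⟩ := mainLemma tri huniv hDU c n hc (by omega) hA hcard H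
    exact ⟨d, fin d h1, h2⟩
  · let D' : Finset αᵒᵈ := U.map OrderDual.toDual.toEmbedding
    let A' : Finset αᵒᵈ := A.map OrderDual.toDual.toEmbedding
    let U' : Finset αᵒᵈ := D.map OrderDual.toDual.toEmbedding
    have mm : ∀ (S : Finset α) (x : αᵒᵈ), x ∈ S.map OrderDual.toDual.toEmbedding ↔ OrderDual.ofDual x ∈ S := by
      intro S x
      rw [mem_map_equiv]; rfl
    have tri' : Tri D' A' U' := by
      refine ⟨?_, ?_, ?_, ?_, ?_, ?_, ?_⟩ <;> simp only [D', A', U', mm]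
      · exact fun x hx h => tri.dAU _ h hx
      · exact fun x hx h => tri.dDU _ h hx
      · exact fun x hx h => tri.dDA _ h hx
      · exact fun x hx y hy h => (tri.anti _ hy _ hx h).symm
      · exact fun a ha d hd h => tri.nua _ hd _ ha h
      · exact fun a ha d hd h => tri.nad _ hd _ ha h
      · exact fun a ha d hd h => tri.nud _ hd _ ha h
    have huniv' : D' ∪ A' ∪ U' = univ := by
      ext x
      have : OrderDual.ofDual x ∈ D ∪ A ∪ U := by rw [huniv]; exact mem_univ _
      simp only [D', A', U', mem_union, mm, mem_univ, iff_true] at this ⊢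
      tauto
    obtain ⟨d, h1, h2⟩ := mainLemma tri' huniv' (by simp only [D', U', card_map]; omega) c n hc (by omega)
      (by simp only [A', card_map]; exact hA) (by rw [Fintype.card_orderDual]; exact hcard)
      (fun k hk h => H k hk (Dm.ofDual h))
    exact ⟨d, fin d h1, std_ofDual h2⟩
end pos7

/-- Main theorem: with `f c = 3485 * c²` (so `f c = O(c²)`), for every positive
integer `c`, if `n > 10 * f c` and `P` is a finite poset with `|P| ≤ 2n + 1` and
`dim P ≥ n − c`, then `P` contains the standard example `S_d` with `d ≥ n − f c`. -/
theorem stmt_18 (c : ℕ) (hc : 0 < c) (n : ℕ) (hn : 10 * (3485 * c ^ 2) < n)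
    (α : Type*) [PartialOrder α] [Fintype α]
    (hcard : Fintype.card α ≤ 2 * n + 1) (hdim : n - c ≤ dimP α) :
    ∃ d : ℕ, n - 3485 * c ^ 2 ≤ d ∧ ContainsStdExample α d := by
  exact coreThm c hc n hn hcard hdim
end

section
/- For every positive integer c, if n > 10(5c + 12) and P = A ∪ B is a bipartite poset with |P| ≤ 2n + 1 and fractional dimension dim*(P) ≥ n − c, then P contains the standard example S_d with d ≥ n − (5c + 12). -/
open scoped Classical in
/-- `d` is achievable for the fractional dimension: some finitely many linear
extensions carry nonnegative weights summing to `d` so that every incomparable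
pair is reversed with total weight at least `1`. -/
def FdimWitness (α : Type*) [PartialOrder α] (d : ℝ) : Prop :=
  ∃ (k : ℕ) (L : Fin k → (α → α → Prop)) (w : Fin k → ℝ),
    (∀ i, IsLinearExtension (L i)) ∧ (∀ i, 0 ≤ w i) ∧ (∑ i, w i = d) ∧
    ∀ x y : α, Incomp x y → 1 ≤ ∑ i, (if L i y x then w i else 0)

/-- The fractional dimension of a finite poset. -/
noncomputable def fdim (α : Type*) [PartialOrder α] : ℝ :=
  sInf {d : ℝ | FdimWitness α d}

/-- Lexicographic linear extension from a strictly monotone level function and a tie-break. -/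
lemma lex_linearExtension {α : Type*} [PartialOrder α] (f : α → ℕ) (e : α → ℤ)
    (he : Function.Injective e) (hf : ∀ x y, x < y → f x < f y) :
    IsLinearExtension (fun x y : α => f x < f y ∨ (f x = f y ∧ e x ≤ e y)) := by
  refine ⟨{ refl := ?_, trans := ?_, antisymm := ?_, total := ?_ }, ?_⟩
  · intro x; right; exact ⟨rfl, le_rfl⟩
  · intro x y z h1 h2; omega
  · intro x y h1 h2; apply he; omega
  · intro x y; omega
  · intro x y h
    rcases h.eq_or_lt with rfl | h
    · right; exact ⟨rfl, le_rfl⟩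
    · left; exact hf x y h

/-- Double star extension. -/
lemma exists_doubleStar {α : Type*} [PartialOrder α] [Fintype α] (A B : Set α)
    (hA : ∀ a ∈ A, IsMin a) (hB : ∀ b ∈ B, IsMax b)
    (hcover : A ∪ B = Set.univ) (hdisj : Disjoint A B)
    (a b : α) (ha : a ∈ A) (hb : b ∈ B) (hab : ¬ a ≤ b) :
    ∃ L : α → α → Prop, IsLinearExtension L ∧
      ∀ x ∈ A, ∀ y ∈ B, ¬ x ≤ y → (a = x ∨ b = y) → L y x := by
  classical
  let e : α → ℤ := fun x => ((Fintype.equivFin α x : ℕ) : ℤ)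
  have he : Function.Injective e := by
    intro x y h
    apply (Fintype.equivFin α).injective
    apply Fin.ext
    exact Int.ofNat.inj h
  have hAB : ∀ x, x ∈ A → x ∉ B := fun x h1 h2 => Set.disjoint_left.1 hdisj h1 h2
  let f : α → ℕ := fun x =>
    if x ∈ A then (if x ≤ b then 0 else if x = a then 4 else 2)
    else (if x = b then 1 else if a ≤ x then 5 else 3)
  refine ⟨_, lex_linearExtension f e he ?_, ?_⟩
  · intro x y hxy
    have hyA : y ∉ A := fun h => absurd hxy ((hA y h).not_lt)
    have hxA : x ∈ A := by
      have : x ∈ A ∪ B := by rw [hcover]; trivial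
      rcases this with h | h
      · exact h
      · exact absurd hxy ((hB x h).not_lt)
    have hle := hxy.le
    simp only [f, hyA, hxA, if_true, if_false]
    split_ifs <;> first | omega | (subst_vars; contradiction)
  · intro x hx y hy hxy h
    have hyA : y ∉ A := fun h => hAB y h hy
    left
    simp only [f, hyA, hx, if_true, if_false]
    rcases h with rfl | rfl
    · split_ifs <;> first | omega | contradiction
    · split_ifs <;> first | omega | contradiction

lemma fdim_le_of_witness {α : Type*} [PartialOrder α] {d : ℝ} (h : FdimWitness α d) :
    fdim α ≤ d := by
  refine csInf_le ⟨0, ?_⟩ h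
  rintro d ⟨k, L, w, -, hw, rfl, -⟩
  exact Finset.sum_nonneg fun i _ => hw i

open scoped Classical in
lemma witness_of_fintype {α ι : Type*} [PartialOrder α] [Fintype ι]
    (L : ι → (α → α → Prop)) (w : ι → ℝ)
    (hL : ∀ i, IsLinearExtension (L i)) (hw : ∀ i, 0 ≤ w i)
    (h : ∀ x y : α, Incomp x y → 1 ≤ ∑ i, (if L i y x then w i else 0)) :
    FdimWitness α (∑ i, w i) := by
  let e := (Fintype.equivFin ι).symm
  refine ⟨Fintype.card ι, fun i => L (e i), fun i => w (e i), fun i => hL _, fun i => hw _,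
    e.sum_comp w, ?_⟩
  intro x y hxy
  refine (h x y hxy).trans_eq ?_
  exact (e.sum_comp (fun i => if L i y x then w i else 0)).symm

open scoped Classical in
/-- Upper bound on the fractional dimension from a family of double stars of equal weight. -/
lemma fdim_le_doubleStars {α ι : Type*} [PartialOrder α] [Fintype α] [Fintype ι] (A B : Set α)
    (hA : ∀ a ∈ A, IsMin a) (hB : ∀ b ∈ B, IsMax b)
    (hcover : A ∪ B = Set.univ) (hdisj : Disjoint A B)
    (p : ι → α × α) (hp : ∀ i, (p i).1 ∈ A ∧ (p i).2 ∈ B ∧ ¬ (p i).1 ≤ (p i).2)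
    (w : ℝ) (hw : 0 ≤ w)
    (h : ∀ x ∈ A, ∀ y ∈ B, ¬ x ≤ y →
      1 ≤ ∑ i, (if (p i).1 = x ∨ (p i).2 = y then w else 0)) :
    fdim α ≤ 2 + w * Fintype.card ι := by
  choose D hD hD2 using fun i => exists_doubleStar A B hA hB hcover hdisj (p i).1 (p i).2
    (hp i).1 (hp i).2.1 (hp i).2.2
  let e : α → ℤ := fun x => ((Fintype.equivFin α x : ℕ) : ℤ)
  have he : Function.Injective e := by
    intro x y h
    apply (Fintype.equivFin α).injective
    apply Fin.ext
    exact Int.ofNat.inj h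
  have hAB : ∀ x, x ∈ A → x ∉ B := fun x h1 h2 => Set.disjoint_left.1 hdisj h1 h2
  have hc : ∀ x, x ∈ A ∨ x ∈ B := by
    intro x
    have : x ∈ A ∪ B := by rw [hcover]; trivial
    exact this
  let f : α → ℕ := fun x => if x ∈ A then 0 else 1
  have hf : ∀ x y, x < y → f x < f y := by
    intro x y hxy
    have hyA : y ∉ A := fun h => absurd hxy ((hA y h).not_lt)
    have hxA : x ∈ A := by
      rcases hc x with h | h
      · exact h
      · exact absurd hxy ((hB x h).not_lt)
    simp [f, hyA, hxA]
  let E : Bool → ℤ := fun s => if s then 1 else -1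
  let L : Bool ⊕ ι → α → α → Prop := Sum.elim
    (fun s x y => f x < f y ∨ (f x = f y ∧ E s * e x ≤ E s * e y)) D
  let W : Bool ⊕ ι → ℝ := Sum.elim (fun _ => 1) (fun _ => w)
  have key := witness_of_fintype L W ?_ ?_ ?_
  · have := fdim_le_of_witness key
    simpa [W, mul_comm] using this
  · rintro (s | i)
    · apply lex_linearExtension f (fun x => E s * e x) _ hf
      intro x y hxy
      apply he
      cases s <;> simpa [E] using hxy
    · exact hD i
  · rintro (s | i)
    · simp [W]
    · simpa [W] using hw
  · intro x y hxy
    have nn1 : ∀ s : Bool, 0 ≤ (if L (Sum.inl s) y x then W (Sum.inl s) else 0) := by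
      intro s; split_ifs <;> simp [W]
    have nn2 : ∀ i : ι, 0 ≤ (if L (Sum.inr i) y x then W (Sum.inr i) else 0) := by
      intro s; split_ifs <;> simp [W, hw]
    rw [Fintype.sum_sum_type]
    by_cases hcase : x ∈ A ∧ y ∈ B
    · have h1 := h x hcase.1 y hcase.2 hxy.1
      have h2 : ∑ i, (if (p i).1 = x ∨ (p i).2 = y then w else 0) ≤
          ∑ i, (if L (Sum.inr i) y x then W (Sum.inr i) else 0) := by
        apply Finset.sum_le_sum
        intro i _
        by_cases hi : (p i).1 = x ∨ (p i).2 = y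
        · have : L (Sum.inr i) y x := hD2 i x hcase.1 y hcase.2 hxy.1 hi
          rw [if_pos hi, if_pos this]; simp [W]
        · rw [if_neg hi]; exact nn2 i
      have h3 := Finset.sum_nonneg fun s (_ : s ∈ Finset.univ) => nn1 s
      linarith
    · have h3 := Finset.sum_nonneg fun i (_ : i ∈ Finset.univ) => nn2 i
      have hfle : f y ≤ f x := by
        by_cases hx : x ∈ A
        · have hy : y ∈ A := (hc y).resolve_right fun hy => hcase ⟨hx, hy⟩
          simp [f, hx, hy]
        · simp only [f, hx, if_false]; split_ifs <;> simp
      have : ∃ s, L (Sum.inl s) y x := by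
        rcases hfle.lt_or_eq with hlt | heq
        · exact ⟨true, Or.inl hlt⟩
        · rcases le_total (e y) (e x) with h | h
          · exact ⟨true, Or.inr ⟨heq, by simpa [E] using h⟩⟩
          · exact ⟨false, Or.inr ⟨heq, by simpa [E] using h⟩⟩
      obtain ⟨s, hs⟩ := this
      have h1 := Finset.single_le_sum (fun s _ => nn1 s) (Finset.mem_univ s)
      rw [if_pos hs] at h1
      simp only [W, Sum.elim_inl] at h1 h3 ⊢
      linarith

/-- For every positive integer `c`, if `n > 10(5c + 12)` and `P = A ∪ B` is a finite
bipartite poset with `|P| ≤ 2n + 1` and fractional dimension `dim* P ≥ n − c`, then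
`P` contains the standard example `S_d` with `d ≥ n − (5c + 12)`. -/
theorem stmt_19 (c : ℕ) (hc : 0 < c) (n : ℕ) (hn : 10 * (5 * c + 12) < n)
    (α : Type*) [PartialOrder α] [Fintype α] (A B : Set α)
    (hA : ∀ a ∈ A, IsMin a) (hB : ∀ b ∈ B, IsMax b)
    (hcover : A ∪ B = Set.univ) (hdisj : Disjoint A B)
    (hcard : Fintype.card α ≤ 2 * n + 1)
    (hdim : (n : ℝ) - c ≤ fdim α) :
    ∃ d : ℕ, n - (5 * c + 12) ≤ d ∧
      ∃ a b : Fin d → α, Function.Injective a ∧ Function.Injective b ∧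
        (∀ i, a i ∈ A) ∧ (∀ i, b i ∈ B) ∧
        (∀ i j : Fin d, a i < b j ↔ i ≠ j) ∧
        (∀ i : Fin d, Incomp (a i) (b i)) := by
  classical
  -- maximal matching of the incomparability graph
  let PM : Finset (α × α) → Prop := fun M =>
    (∀ p ∈ M, p.1 ∈ A ∧ p.2 ∈ B ∧ ¬ p.1 ≤ p.2) ∧
    ∀ p ∈ M, ∀ q ∈ M, (p.1 = q.1 ∨ p.2 = q.2) → p = q
  obtain ⟨M, hM, hMmax⟩ := Finset.exists_max_image (Finset.univ.filter PM) Finset.card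
    ⟨∅, by simp [PM]⟩
  have hM' : PM M := by simpa using hM
  obtain ⟨hM1, hM2⟩ := hM'
  have hAB : ∀ x, x ∈ A → x ∉ B := fun x h1 h2 => Set.disjoint_left.1 hdisj h1 h2
  have hMcov : ∀ x ∈ A, ∀ y ∈ B, ¬ x ≤ y → ∃ p ∈ M, p.1 = x ∨ p.2 = y := by
    intro x hx y hy hxy
    by_contra! hcon
    have hnot : (x, y) ∉ M := fun h => (hcon _ h).1 rfl
    have hP : PM (insert (x, y) M) := by
      refine ⟨?_, ?_⟩
      · intro p hp
        rcases Finset.mem_insert.1 hp with rfl | hp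
        · exact ⟨hx, hy, hxy⟩
        · exact hM1 p hp
      · intro p hp q hq h
        rcases Finset.mem_insert.1 hp with rfl | hp <;> rcases Finset.mem_insert.1 hq with rfl | hq
        · rfl
        · have := hcon q hq
          rcases h with h | h
          · exact absurd h.symm this.1
          · exact absurd h.symm this.2
        · have := hcon p hp
          rcases h with h | h
          · exact absurd h this.1
          · exact absurd h this.2
        · exact hM2 p hp q hq h
    have := hMmax _ (by simpa using hP)
    rw [Finset.card_insert_of_notMem hnot] at this
    omega
  -- first bound
  have bound1 : (n : ℝ) - c ≤ 2 + M.card := by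
    have := fdim_le_doubleStars (ι := M) A B hA hB hcover hdisj (fun i => i.1)
      (fun i => hM1 i.1 i.2) 1 zero_le_one ?_
    · simp only [Fintype.card_coe, one_mul] at this
      linarith
    · intro x hx y hy hxy
      obtain ⟨p, hp, hpxy⟩ := hMcov x hx y hy hxy
      have := Finset.single_le_sum (f := fun i : M => if i.1.1 = x ∨ i.1.2 = y then (1 : ℝ) else 0)
        (fun i _ => by split_ifs <;> simp) (Finset.mem_univ ⟨p, hp⟩)
      simpa [hpxy] using this
  -- maximal matching of non-induced pairs
  let PK : Finset ((α × α) × (α × α)) → Prop := fun K =>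
    (∀ s ∈ K, s.1 ∈ M ∧ s.2 ∈ M ∧ s.1 ≠ s.2 ∧ ¬ s.1.1 ≤ s.2.2) ∧
    ∀ s ∈ K, ∀ t ∈ K, (s.1 = t.1 ∨ s.1 = t.2 ∨ s.2 = t.1 ∨ s.2 = t.2) → s = t
  obtain ⟨K, hK, hKmax⟩ := Finset.exists_max_image (Finset.univ.filter PK) Finset.card
    ⟨∅, by simp [PK]⟩
  have hK' : PK K := by simpa using hK
  obtain ⟨hK1, hK2⟩ := hK'
  let V : Finset (α × α) := K.image Prod.fst ∪ K.image Prod.snd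
  let I : Finset (α × α) := M \ V
  have hVM : V ⊆ M := by
    intro p hp
    simp only [V, Finset.mem_union, Finset.mem_image] at hp
    rcases hp with ⟨s, hs, rfl⟩ | ⟨s, hs, rfl⟩
    · exact (hK1 s hs).1
    · exact (hK1 s hs).2.1
  have hVcard : V.card = 2 * K.card := by
    rw [Finset.card_union_of_disjoint, Finset.card_image_of_injOn, Finset.card_image_of_injOn]
    · omega
    · intro s hs t ht h; exact hK2 s hs t ht (by tauto)
    · intro s hs t ht h; exact hK2 s hs t ht (by tauto)
    · rw [Finset.disjoint_left]
      intro p h1 h2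
      obtain ⟨s, hs, rfl⟩ := Finset.mem_image.1 h1
      obtain ⟨t, ht, h⟩ := Finset.mem_image.1 h2
      have := hK2 s hs t ht (by right; left; exact h.symm)
      subst this
      exact (hK1 s hs).2.2.1 h.symm
  have hIcard : I.card + 2 * K.card = M.card := by
    have := Finset.card_sdiff_add_card_eq_card hVM
    simp only [I]; omega
  have hInd : ∀ p ∈ I, ∀ q ∈ I, p ≠ q → p.1 ≤ q.2 := by
    intro p hp q hq hpq
    by_contra hcon
    have hp' := Finset.mem_sdiff.1 hp
    have hq' := Finset.mem_sdiff.1 hq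
    have hpn : ∀ s ∈ K, s.1 ≠ p ∧ s.2 ≠ p := by
      intro s hs
      refine ⟨fun h => hp'.2 ?_, fun h => hp'.2 ?_⟩
      · exact Finset.mem_union_left _ (Finset.mem_image.2 ⟨s, hs, h⟩)
      · exact Finset.mem_union_right _ (Finset.mem_image.2 ⟨s, hs, h⟩)
    have hqn : ∀ s ∈ K, s.1 ≠ q ∧ s.2 ≠ q := by
      intro s hs
      refine ⟨fun h => hq'.2 ?_, fun h => hq'.2 ?_⟩
      · exact Finset.mem_union_left _ (Finset.mem_image.2 ⟨s, hs, h⟩)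
      · exact Finset.mem_union_right _ (Finset.mem_image.2 ⟨s, hs, h⟩)
    have hnot : (p, q) ∉ K := fun h => (hpn _ h).1 rfl
    have hP : PK (insert (p, q) K) := by
      refine ⟨?_, ?_⟩
      · intro s hs
        rcases Finset.mem_insert.1 hs with rfl | hs
        · exact ⟨hp'.1, hq'.1, hpq, hcon⟩
        · exact hK1 s hs
      · intro s hs t ht h
        rcases Finset.mem_insert.1 hs with rfl | hs <;> rcases Finset.mem_insert.1 ht with rfl | ht
        · rfl
        · have h1 := hpn t ht
          have h2 := hqn t ht
          simp only [@eq_comm _ p, @eq_comm _ q] at h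
          tauto
        · have h1 := hpn s hs
          have h2 := hqn s hs
          dsimp only at h
          tauto
        · exact hK2 s hs t ht h
    have := hKmax _ (by simpa using hP)
    rw [Finset.card_insert_of_notMem hnot] at this
    omega
  -- unmatched, non-isolated vertices
  let T : Finset α := M.image Prod.fst ∪ M.image Prod.snd
  have hTcard : T.card = 2 * M.card := by
    rw [Finset.card_union_of_disjoint, Finset.card_image_of_injOn, Finset.card_image_of_injOn]
    · omega
    · intro s hs t ht h; exact hM2 s hs t ht (Or.inr h)
    · intro s hs t ht h; exact hM2 s hs t ht (Or.inl h)
    · rw [Finset.disjoint_left]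
      intro p h1 h2
      obtain ⟨s, hs, rfl⟩ := Finset.mem_image.1 h1
      obtain ⟨t, ht, h⟩ := Finset.mem_image.1 h2
      exact hAB _ (hM1 s hs).1 (h ▸ (hM1 t ht).2.1)
  let Q : α → α × α → Prop := fun x p => p.1 ∈ A ∧ p.2 ∈ B ∧ ¬ p.1 ≤ p.2 ∧ (p.1 = x ∨ p.2 = x)
  let U : Finset α := (Finset.univ \ T).filter (fun x => ∃ p, Q x p)
  have hUcard : U.card + 2 * M.card ≤ 2 * n + 1 := by
    have h1 : U.card ≤ (Finset.univ \ T).card := Finset.card_filter_le _ _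
    have h2 := Finset.card_sdiff_add_card_eq_card (Finset.subset_univ T)
    rw [Finset.card_univ] at h2
    omega
  have hg : ∀ x : U, ∃ p, Q x.1 p := fun x => (Finset.mem_filter.1 x.2).2
  choose g hg using hg
  let P : M ⊕ K ⊕ I ⊕ U → α × α := Sum.elim (fun p => p.1)
    (Sum.elim (fun s => (s.1.1.1, s.1.2.2)) (Sum.elim (fun p => p.1) g))
  have bound2 : (n : ℝ) - c ≤ 2 + (1 / 2) * (M.card + (K.card + (I.card + U.card))) := by
    have := fdim_le_doubleStars A B hA hB hcover hdisj P ?_ (1 / 2) (by norm_num) ?_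
    · simp only [Fintype.card_sum, Fintype.card_coe, Nat.cast_add] at this
      linarith
    · rintro (p | s | p | x)
      · exact hM1 p.1 p.2
      · have := hK1 s.1 s.2
        exact ⟨(hM1 _ this.1).1, (hM1 _ this.2.1).2.1, this.2.2.2⟩
      · exact hM1 p.1 (Finset.mem_sdiff.1 p.2).1
      · exact ⟨(hg x).1, (hg x).2.1, (hg x).2.2.1⟩
    · intro x hx y hy hxy
      have key : ∃ i j, i ≠ j ∧ ((P i).1 = x ∨ (P i).2 = y) ∧ ((P j).1 = x ∨ (P j).2 = y) := by
        have hun : ∀ z (hz : z ∉ T), (∃ p, Q z p) → z ∈ U := fun z hz h =>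
          Finset.mem_filter.2 ⟨Finset.mem_sdiff.2 ⟨Finset.mem_univ _, hz⟩, h⟩
        obtain ⟨p, hp, hpxy⟩ := hMcov x hx y hy hxy
        by_cases hxT : x ∈ T
        · by_cases hyT : y ∈ T
          · have hx1 : ∃ p ∈ M, p.1 = x := by
              rcases Finset.mem_union.1 hxT with h | h
              · exact Finset.mem_image.1 h
              · obtain ⟨q, hq, rfl⟩ := Finset.mem_image.1 h
                exact absurd (hM1 q hq).2.1 (hAB _ hx)
            have hy1 : ∃ p ∈ M, p.2 = y := by
              rcases Finset.mem_union.1 hyT with h | h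
              · obtain ⟨q, hq, rfl⟩ := Finset.mem_image.1 h
                exact absurd hy (hAB _ (hM1 q hq).1)
              · exact Finset.mem_image.1 h
            obtain ⟨p, hp, hpx⟩ := hx1
            obtain ⟨q, hq, hqy⟩ := hy1
            by_cases hpq : p = q
            · subst hpq
              by_cases hpV : p ∈ V
              · rcases Finset.mem_union.1 hpV with h | h
                · obtain ⟨s, hs, hsp⟩ := Finset.mem_image.1 h
                  refine ⟨Sum.inl ⟨p, hp⟩, Sum.inr (Sum.inl ⟨s, hs⟩), by simp, Or.inl hpx, Or.inl ?_⟩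
                  simp [P, hsp, hpx]
                · obtain ⟨s, hs, hsp⟩ := Finset.mem_image.1 h
                  refine ⟨Sum.inl ⟨p, hp⟩, Sum.inr (Sum.inl ⟨s, hs⟩), by simp, Or.inl hpx, Or.inr ?_⟩
                  simp [P, hsp, hqy]
              · exact ⟨Sum.inl ⟨p, hp⟩, Sum.inr (Sum.inr (Sum.inl ⟨p, Finset.mem_sdiff.2 ⟨hp, hpV⟩⟩)),
                  by simp, Or.inl hpx, Or.inl hpx⟩
            · exact ⟨Sum.inl ⟨p, hp⟩, Sum.inl ⟨q, hq⟩, by simpa using hpq, Or.inl hpx, Or.inr hqy⟩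
          · have hyU := hun y hyT ⟨(x, y), hx, hy, hxy, Or.inr rfl⟩
            refine ⟨Sum.inl ⟨p, hp⟩, Sum.inr (Sum.inr (Sum.inr ⟨y, hyU⟩)), by simp, hpxy, Or.inr ?_⟩
            have h := hg ⟨y, hyU⟩
            rcases h.2.2.2 with h' | h'
            · have h1 := h.1
              rw [h'] at h1
              exact absurd hy (hAB _ h1)
            · exact h'
        · have hxU := hun x hxT ⟨(x, y), hx, hy, hxy, Or.inl rfl⟩
          refine ⟨Sum.inl ⟨p, hp⟩, Sum.inr (Sum.inr (Sum.inr ⟨x, hxU⟩)), by simp, hpxy, Or.inl ?_⟩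
          have h := hg ⟨x, hxU⟩
          rcases h.2.2.2 with h' | h'
          · exact h'
          · have h1 := h.2.1
            rw [h'] at h1
            exact absurd h1 (hAB _ hx)
      obtain ⟨i, j, hij, hi, hj⟩ := key
      have := Finset.sum_le_sum_of_subset_of_nonneg
        (f := fun i => if (P i).1 = x ∨ (P i).2 = y then (1 / 2 : ℝ) else 0)
        (Finset.subset_univ {i, j}) (fun i _ _ => by split_ifs <;> norm_num)
      rw [Finset.sum_pair hij, if_pos hi, if_pos hj] at this
      norm_num at this ⊢
      exact this
  refine ⟨I.card, ?_, fun i => (I.equivFin.symm i).1.1, fun i => (I.equivFin.symm i).1.2,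
    ?_, ?_, ?_, ?_, ?_, ?_⟩
  · have b1 : n ≤ c + 2 + M.card := by
      have : (n : ℝ) ≤ c + 2 + M.card := by linarith
      exact_mod_cast this
    have b2 : 2 * n ≤ 2 * c + 4 + (M.card + (K.card + (I.card + U.card))) := by
      have : 2 * (n : ℝ) ≤ 2 * c + 4 + (M.card + (K.card + (I.card + U.card))) := by linarith
      exact_mod_cast this
    omega
  all_goals
    have hI : ∀ i, (I.equivFin.symm i).1 ∈ M := fun i => (Finset.mem_sdiff.1 (I.equivFin.symm i).2).1
  · intro i j h
    exact I.equivFin.symm.injective (Subtype.ext (hM2 _ (hI i) _ (hI j) (Or.inl h)))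
  · intro i j h
    exact I.equivFin.symm.injective (Subtype.ext (hM2 _ (hI i) _ (hI j) (Or.inr h)))
  · intro i; exact (hM1 _ (hI i)).1
  · intro i; exact (hM1 _ (hI i)).2.1
  · intro i j
    constructor
    · rintro h rfl
      exact (hM1 _ (hI i)).2.2 h.le
    · intro hij
      refine lt_of_le_of_ne (hInd _ (I.equivFin.symm i).2 _ (I.equivFin.symm j).2 ?_) ?_
      · intro h
        exact hij (I.equivFin.symm.injective (Subtype.ext h))
      · intro h
        have h1 := (hM1 _ (hI j)).2.1
        dsimp only at h
        rw [← h] at h1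
        exact hAB _ (hM1 _ (hI i)).1 h1
  · intro i
    refine ⟨(hM1 _ (hI i)).2.2, fun h => (hM1 _ (hI i)).2.2 ?_⟩
    exact hB _ (hM1 _ (hI i)).2.1 h
end
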